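/- arXiv:2604.20005 — 2 statements merged into one kernel-verified Lean document; each statement's English description precedes it below -/
import Mathlib

section
/- Let S be a commutative ring and J ⊆ S an ideal generated, locally on Spec S, by a regular sequence of length c (a regular ideal of codimension c). Then Ext^i_S(S/J, S) = 0 for i ≠ c, and there is a canonical isomorphism Ext^c_S(S/J, S) ≅ ⋀^c (J/J²)^∨ of S/J-modules, where (−)^∨ = Hom_{S/J}(−, S/J). -/
/-!
# The fundamental local isomorphism for a regular ideal

Let `A = S ⧸ J`. The isomorphism is induced by a globally defined map, and it is checked locally
that this map is bijective.

*Resolution.* Having a resolution of length `c` by finite projective modules is a Zariski-local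
property (`HasFiniteRes.of_localizationSpan`), by Schanuel's lemma `HasFiniteRes.ker`, and a
quotient by a regular sequence of length `c` has it. So `A` has a resolution `F` by finite free
modules with differential `d` which splits from degree `c` on (`FreeRes`). The splitting gives
`Extⁱ (A, S) = 0` for `i > c`.

*Contractions.* Each `x ∈ J` acts on `F` by a map homotopic to zero; choose a homotopy `s x`, so
that `d s + s d = x`. The map `φ ↦ φ ∘ s x` on cochains with values in `A` anticommutes with the
differential. On the cohomology `Ext (A, A)` it squares to zero, is additive and linear in `x` and
vanishes for `x ∈ J²`, because the relevant combinations of homotopies are null-homotopic. Hence the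
exterior algebra of `J / J²` acts on `Ext (A, A)` (`FreeRes.conExt`). Letting `w ∈ ⋀ᶜ (J / J²)` act
on the reduction modulo `J` of a cocycle `φ : F c → S` and projecting to `Ext⁰ (A, A) = A` defines
the comparison map `FreeRes.theta` from the `c`-cocycles to the dual of `⋀ᶜ (J / J²)`. It kills
coboundaries.

*Local computation.* After inverting some `g` there is a regular sequence `L` of `c` elements of `J`
generating `J` up to powers of `g`. For a cocycle `φ` one has `x • φ = (φ ∘ s x) ∘ d`, and
`φ ∘ s x` is a cocycle modulo `x`. By induction on `L`, dividing the coefficients by its first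
element, this shows that cocycles of degree less than `c` are coboundaries
(`FreeRes.isCob_of_lt`) and that contracting successively with the elements of `L` induces an
isomorphism from `c`-cocycles modulo coboundaries to forms `F 0 → N ⧸ L N` vanishing on the image
of `d`, where `N` is the module of coefficients (`FreeRes.isCob_of_conRev`,
`FreeRes.exists_conRev_sub_mem`).

*Patching.* The wedge of `L` generates `⋀ᶜ (J / J²)` locally, and `FreeRes.theta` evaluated on it is
the contraction along `L` (`FreeRes.theta_ιMulti`). As being a coboundary and being in the image of
the comparison map are both local conditions, the kernel of the comparison map is the module of
coboundaries and the map is surjective. By `FreeRes.ext_equiv` it identifies `Extᶜ (A, S)` with the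
dual of `⋀ᶜ (J / J²)`.
-/

open CategoryTheory

/-- `J` is an ideal of `S` which is, Zariski-locally on `Spec S`, generated by a regular
sequence of length `c` (a regular ideal of codimension `c`). -/
def IsLocallyRegularOfCodim {S : Type*} [CommRing S] (J : Ideal S) (c : ℕ) : Prop :=
  ∀ (P : Ideal S), P.IsPrime → ∃ g : S, g ∉ P ∧ ∃ f : Fin c → S,
    RingTheory.Sequence.IsRegular (Localization.Away g)
      (List.ofFn fun i => algebraMap S (Localization.Away g) (f i)) ∧
    J.map (algebraMap S (Localization.Away g)) =
      Ideal.span (Set.range fun i => algebraMap S (Localization.Away g) (f i))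

universe u v

/-! ### Modules with finite projective resolutions -/

/-- `M` has a resolution of length `n` by finite projective modules. -/
def HasFiniteRes (R : Type u) [CommRing R] :
    ℕ → ∀ (M : Type u) [AddCommGroup M] [Module R M], Prop
  | 0 => fun M _ _ => Module.Finite R M ∧ Module.Projective R M
  | n + 1 => fun M _ _ => ∃ (F : Type u) (_ : AddCommGroup F) (_ : Module R F)
      (_ : Module.Finite R F) (_ : Module.Projective R F) (p : F →ₗ[R] M),
      Function.Surjective p ∧ HasFiniteRes R n (LinearMap.ker p)

namespace HasFiniteRes

variable {R : Type u} [CommRing R]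

lemma of_equiv {n : ℕ} {M N : Type u} [AddCommGroup M] [Module R M] [AddCommGroup N] [Module R N]
    (e : M ≃ₗ[R] N) (h : HasFiniteRes R n M) : HasFiniteRes R n N := by
  cases n with
  | zero =>
    obtain ⟨h1, h2⟩ := h
    exact ⟨Module.Finite.equiv e, Module.Projective.of_equiv e⟩
  | succ n =>
    obtain ⟨F, _, _, h1, h2, p, hp, hk⟩ := h
    refine ⟨F, _, _, h1, h2, e.toLinearMap ∘ₗ p, e.surjective.comp hp, ?_⟩
    rwa [LinearEquiv.ker_comp]

lemma finite {n : ℕ} {M : Type u} [AddCommGroup M] [Module R M] (h : HasFiniteRes R n M) :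
    Module.Finite R M := by
  cases n with
  | zero => exact h.1
  | succ n =>
    obtain ⟨F, _, _, h1, h2, p, hp, hk⟩ := h
    exact Module.Finite.of_surjective p hp

lemma succ {n : ℕ} {M : Type u} [AddCommGroup M] [Module R M] (h : HasFiniteRes R n M) :
    HasFiniteRes R (n + 1) M := by
  induction n generalizing M with
  | zero =>
    refine ⟨M, _, _, h.1, h.2, LinearMap.id, Function.surjective_id, ?_⟩
    have : Subsingleton (LinearMap.ker (LinearMap.id : M →ₗ[R] M)) := by
      rw [LinearMap.ker_id]; infer_instance
    exact ⟨inferInstance, inferInstance⟩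
  | succ n ih =>
    obtain ⟨F, _, _, h1, h2, p, hp, hk⟩ := h
    exact ⟨F, _, _, h1, h2, p, hp, ih hk⟩

lemma of_projective (n : ℕ) {M : Type u} [AddCommGroup M] [Module R M] [Module.Finite R M]
    [Module.Projective R M] : HasFiniteRes R n M := by
  induction n with
  | zero => exact ⟨inferInstance, inferInstance⟩
  | succ n ih => exact ih.succ

/-- Horseshoe lemma. -/
lemma of_exact {n : ℕ} {A B C : Type u} [AddCommGroup A] [Module R A] [AddCommGroup B] [Module R B]
    [AddCommGroup C] [Module R C] (f : A →ₗ[R] B) (g : B →ₗ[R] C) (hf : Function.Injective f)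
    (hfg : Function.Exact f g) (hg : Function.Surjective g)
    (hA : HasFiniteRes R n A) (hC : HasFiniteRes R n C) : HasFiniteRes R n B := by
  induction n generalizing A B C with
  | zero =>
    obtain ⟨h1, h2⟩ := hA
    obtain ⟨h3, h4⟩ := hC
    obtain ⟨l, hl⟩ := Module.projective_lifting_property g LinearMap.id hg
    obtain ⟨e, -⟩ := (hfg.splitSurjectiveEquiv hf ⟨l, hl⟩)
    exact ⟨Module.Finite.equiv e.symm, Module.Projective.of_equiv e.symm⟩
  | succ n ih =>
    obtain ⟨F, _, _, h1, h2, p, hp, hpk⟩ := hA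
    obtain ⟨G, _, _, h3, h4, q, hq, hqk⟩ := hC
    obtain ⟨l, hl⟩ := Module.projective_lifting_property g q hg
    have hl' : ∀ x, g (l x) = q x := fun x => LinearMap.congr_fun hl x
    have hgf : ∀ x, g (f x) = 0 := fun x => (hfg _).2 ⟨x, rfl⟩
    let r : F × G →ₗ[R] B := (f ∘ₗ p).coprod l
    have hr : ∀ x, r x = f (p x.1) + l x.2 := fun x => rfl
    refine ⟨F × G, _, _, inferInstance, inferInstance, r, ?_, ?_⟩
    · intro b
      obtain ⟨y, hy⟩ := hq (g b)
      obtain ⟨a, ha⟩ := (hfg (b - l y)).1 (by rw [map_sub, hl', hy, sub_self])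
      obtain ⟨x, rfl⟩ := hp a
      exact ⟨(x, y), by rw [hr, ha]; simp⟩
    · let i : LinearMap.ker p →ₗ[R] LinearMap.ker r :=
        (LinearMap.inl R F G).restrict (by intro x hx; simp_all)
      let j : LinearMap.ker r →ₗ[R] LinearMap.ker q :=
        (LinearMap.snd R F G).restrict (by
          intro x hx
          have := congrArg g (show r x = 0 from hx)
          rw [hr, map_add, hgf, hl', zero_add, map_zero] at this
          exact this)
      refine ih i j ?_ ?_ ?_ hpk hqk
      · intro x y hxy
        have := congrArg Prod.fst (congrArg Subtype.val hxy)
        exact Subtype.ext this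
      · rintro ⟨⟨x, y⟩, hx⟩
        constructor
        · intro h
          have hy : y = 0 := congrArg Subtype.val h
          subst hy
          have : f (p x) = 0 := by
            have := (show r _ = 0 from hx)
            simpa [hr] using this
          exact ⟨⟨x, hf (by rw [this, map_zero])⟩, rfl⟩
        · rintro ⟨z, hz⟩
          apply Subtype.ext
          exact (congrArg Prod.snd (congrArg Subtype.val hz)).symm
      · rintro ⟨y, hy⟩
        have hy' : q y = 0 := hy
        obtain ⟨a, ha⟩ := (hfg (l y)).1 (by rw [hl', hy'])
        obtain ⟨x, rfl⟩ := hp a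
        exact ⟨⟨(-x, y), by simp [hr, ha]⟩, rfl⟩

/-- The cokernel of an injection `A → B` is resolved by the mapping cone: covering `B` by `F`
makes the kernel of `F → C` an extension of `A` by the kernel of `F → B`. -/
lemma quotient {n : ℕ} {A B C : Type u} [AddCommGroup A] [Module R A] [AddCommGroup B] [Module R B]
    [AddCommGroup C] [Module R C] (f : A →ₗ[R] B) (g : B →ₗ[R] C) (hf : Function.Injective f)
    (hfg : Function.Exact f g) (hg : Function.Surjective g)
    (hA : HasFiniteRes R n A) (hB : HasFiniteRes R (n + 1) B) : HasFiniteRes R (n + 1) C := by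
  obtain ⟨F, _, _, h1, h2, p, hp, hpk⟩ := hB
  refine ⟨F, _, _, h1, h2, g ∘ₗ p, hg.comp hp, ?_⟩
  let i : LinearMap.ker p →ₗ[R] LinearMap.ker (g ∘ₗ p) :=
    Submodule.inclusion (LinearMap.ker_le_ker_comp p g)
  let e : A ≃ₗ[R] LinearMap.range f := LinearEquiv.ofInjective f hf
  let j : LinearMap.ker (g ∘ₗ p) →ₗ[R] LinearMap.range f :=
    p.restrict (fun x hx => (hfg _).1 hx)
  refine of_exact i j (Submodule.inclusion_injective _) ?_ ?_ hpk (hA.of_equiv e)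
  · rintro ⟨x, hx⟩
    constructor
    · intro h
      exact ⟨⟨x, congrArg Subtype.val h⟩, rfl⟩
    · rintro ⟨z, hz⟩
      apply Subtype.ext
      have : (z : F) = x := congrArg Subtype.val hz
      subst this
      exact z.2
  · rintro ⟨_, a, rfl⟩
    obtain ⟨x, hx⟩ := hp (f a)
    exact ⟨⟨x, by simp [hx, (hfg (f a)).2 ⟨a, rfl⟩]⟩, Subtype.ext hx⟩

/-- A finite projective direct factor can be split off, being embedded with cokernel `A`. -/
lemma of_prod {n : ℕ} {A F : Type u} [AddCommGroup A] [Module R A] [AddCommGroup F] [Module R F]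
    [Module.Finite R F] [Module.Projective R F] (h : HasFiniteRes R n (A × F)) :
    HasFiniteRes R n A := by
  cases n with
  | zero =>
    obtain ⟨h1, h2⟩ := h
    exact ⟨Module.Finite.of_surjective (LinearMap.fst R A F) LinearMap.fst_surjective,
      Module.Projective.of_split (LinearMap.inl R A F) (LinearMap.fst R A F)
        (LinearMap.fst_comp_inl R A F)⟩
  | succ n =>
    exact quotient (LinearMap.inr R A F) (LinearMap.fst R A F) LinearMap.inr_injective
      .inr_fst LinearMap.fst_surjective (of_projective n) h

/-- By Schanuel's lemma the kernel of any surjection from a finite projective module has a shorter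
resolution. -/
lemma ker {n : ℕ} {M P : Type u} [AddCommGroup M] [Module R M] [AddCommGroup P] [Module R P]
    [Module.Finite R P] [Module.Projective R P] (h : HasFiniteRes R (n + 1) M) (p : P →ₗ[R] M)
    (hp : Function.Surjective p) : HasFiniteRes R n (LinearMap.ker p) := by
  obtain ⟨F, _, _, h1, h2, q, hq, hqk⟩ := h
  obtain ⟨l, hl⟩ := Module.projective_lifting_property p q hp
  have hl' : ∀ x, p (l x) = q x := fun x => LinearMap.congr_fun hl x
  -- `ker p × F` is the fibre product of `p` and `q`, an extension of `P` by `ker q`.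
  let i : LinearMap.ker q →ₗ[R] LinearMap.ker p × F :=
    LinearMap.prod (-(l.restrict (fun x hx => by
      change p (l x) = 0; rw [hl']; exact hx))) (Submodule.subtype _)
  let j : LinearMap.ker p × F →ₗ[R] P := (Submodule.subtype _).coprod l
  have hi : ∀ x, i x = (-⟨l x, by rw [LinearMap.mem_ker, hl']; exact x.2⟩, (x : F)) :=
    fun x => rfl
  have hj : ∀ x, j x = x.1 + l x.2 := fun x => rfl
  refine of_prod (F := F) (of_exact i j ?_ ?_ ?_ hqk (of_projective n))
  · intro x y hxy
    exact Subtype.ext (congrArg Prod.snd hxy)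
  · rintro ⟨⟨x, hx⟩, y⟩
    constructor
    · intro h
      rw [hj] at h
      have h' : x = - l y := eq_neg_of_add_eq_zero_left h
      have hx' : p x = 0 := hx
      refine ⟨⟨y, ?_⟩, ?_⟩
      · rw [LinearMap.mem_ker, ← hl']
        rw [h', map_neg, neg_eq_zero] at hx'
        exact hx'
      · rw [hi]
        exact Prod.ext (Subtype.ext h'.symm) rfl
    · rintro ⟨z, hz⟩
      rw [← hz, hj, hi]
      simp
  · intro y
    obtain ⟨x, hx⟩ := hq (p y)
    refine ⟨(⟨y - l x, by simp [hl', hx]⟩, x), ?_⟩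
    simp [hj]

open RingTheory.Sequence Pointwise in
/-- Dividing by a regular sequence of length `k` lengthens the resolution by at most `k`. -/
lemma quotient_regular {n : ℕ} (L : List R) {A : Type u} [AddCommGroup A] [Module R A]
    (hL : IsWeaklyRegular A L) (hA : HasFiniteRes R n A) :
    HasFiniteRes R (n + L.length) (A ⧸ (Ideal.ofList L • ⊤ : Submodule R A)) := by
  induction L generalizing A n with
  | nil =>
    refine hA.of_equiv (Submodule.quotEquivOfEqBot _ ?_).symm
    simp
  | cons x L ih =>
    rw [isWeaklyRegular_cons_iff] at hL
    obtain ⟨hx, hL⟩ := hL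
    have hq : HasFiniteRes R (n + 1) (QuotSMulTop x A) := by
      refine quotient (LinearMap.lsmul R A x) (Submodule.mkQ _) hx ?_ (Submodule.mkQ_surjective _)
        hA hA.succ
      intro y
      rw [Submodule.mkQ_apply, Submodule.Quotient.mk_eq_zero,
        Submodule.mem_smul_pointwise_iff_exists]
      simp
    have := (ih hL hq).of_equiv (Submodule.quotOfListConsSMulTopEquivQuotSMulTopInner A x L).symm
    rwa [List.length_cons, add_comm L.length 1, ← add_assoc]

end HasFiniteRes

/-! ### Locality of finite resolutions, and regular ideals -/

namespace HasFiniteRes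

variable {R : Type u} [CommRing R]

/-- Localization of a presentation: the localized kernel is the kernel of a surjection. -/
lemma localized_ker_presentation (g : R) {M : Type u} [AddCommGroup M] [Module R M]
    {N : Type u} [AddCommGroup N] [Module R N] [Module (Localization.Away g) N]
    [IsScalarTower R (Localization.Away g) N] (f : M →ₗ[R] N) [IsLocalizedModule.Away g f]
    {k : ℕ} (p : (Fin k → R) →ₗ[R] M) (hp : Function.Surjective p) :
    ∃ (F : (Fin k → R) →ₗ[R] (Fin k → Localization.Away g))
      (_ : IsLocalizedModule (Submonoid.powers g) F)
      (q : (Fin k → Localization.Away g) →ₗ[Localization.Away g] N), Function.Surjective q ∧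
      (LinearMap.ker p).localized' (Localization.Away g) (Submonoid.powers g) F =
        LinearMap.ker q :=
  let F : (Fin k → R) →ₗ[R] (Fin k → Localization.Away g) :=
    .pi fun i => Algebra.linearMap R (Localization.Away g) ∘ₗ .proj i
  have hF : IsLocalizedModule (Submonoid.powers g) F := inferInstance
  ⟨F, hF, (IsLocalizedModule.map (Submonoid.powers g) F f p).extendScalarsOfIsLocalization
      (Submonoid.powers g) (Localization.Away g),
    IsLocalizedModule.map_surjective (Submonoid.powers g) F f p hp,
    LinearMap.localized'_ker_eq_ker_localizedMap _ _ _ _ p⟩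

/-- The property `HasFiniteRes R n` is local for the Zariski topology. -/
lemma of_localizationSpan {n : ℕ} (t : Set R) (ht : Ideal.span t = ⊤)
    {M : Type u} [AddCommGroup M] [Module R M]
    (N : t → Type u) [∀ g, AddCommGroup (N g)] [∀ g, Module R (N g)]
    [∀ g : t, Module (Localization.Away g.1) (N g)]
    [∀ g : t, IsScalarTower R (Localization.Away g.1) (N g)]
    (f : ∀ g : t, M →ₗ[R] N g) [∀ g : t, IsLocalizedModule.Away g.1 (f g)]
    (H : ∀ g : t, HasFiniteRes (Localization.Away g.1) n (N g)) : HasFiniteRes R n M := by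
  induction n generalizing M N with
  | zero =>
    have hfin : Module.Finite R M :=
      Module.Finite.of_localizationSpan' t ht (Rₚ := fun g => Localization.Away g.1) f
        (fun g => (H g).finite)
    obtain ⟨k, p, hp⟩ := Module.Finite.exists_fin' R M
    choose F hF q hq hK using fun g : t => localized_ker_presentation g.1 (f g) p hp
    have hker : Module.Finite R (LinearMap.ker p) := by
      rw [Module.Finite.iff_fg]
      refine Submodule.of_localizationSpan' t ht (Rₚ := fun g => Localization.Away g.1) F
        (fun g => ?_)
      rw [hK]
      have := (H g).1
      have := (H g).2
      have := Module.finitePresentation_of_projective (Localization.Away g.1) (N g)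
      exact Module.FinitePresentation.fg_ker _ (hq g)
    have hfp : Module.FinitePresentation R M :=
      Module.finitePresentation_of_surjective p hp (Module.Finite.iff_fg.1 hker)
    have hflat : Module.Flat R M := by
      refine Module.flat_of_isLocalized_span R M t ht N f (fun g => ?_)
      have := (H g).2
      exact (Module.flat_iff_of_isLocalization (Localization.Away g.1)
        (Submonoid.powers g.1) (M := N g)).1 inferInstance
    exact ⟨hfin, Module.Flat.projective_of_finitePresentation⟩
  | succ n ih =>
    have hfin : Module.Finite R M :=
      Module.Finite.of_localizationSpan' t ht (Rₚ := fun g => Localization.Away g.1) f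
        (fun g => (H g).finite)
    obtain ⟨k, p, hp⟩ := Module.Finite.exists_fin' R M
    choose F hF q hq hK using fun g : t => localized_ker_presentation g.1 (f g) p hp
    refine ⟨Fin k → R, _, _, inferInstance, inferInstance, p, hp, ?_⟩
    refine ih _ (fun g => (LinearMap.ker p).toLocalized' (Localization.Away g.1)
      (Submonoid.powers g.1) (F g)) (fun g => ?_)
    rw [hK]
    exact (H g).ker (q g) (hq g)

end HasFiniteRes

lemma Ideal.eq_top_of_forall_prime {S : Type*} [CommRing S] (I : Ideal S)
    (h : ∀ P : Ideal S, P.IsPrime → ∃ g ∈ I, g ∉ P) : I = ⊤ := by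
  by_contra hI
  obtain ⟨P, hP, hIP⟩ := Ideal.exists_le_maximal I hI
  obtain ⟨g, hg, hgP⟩ := h P hP.isPrime
  exact hgP (hIP hg)

lemma Ideal.ofList_ofFn {S : Type*} [CommRing S] {n : ℕ} (f : Fin n → S) :
    Ideal.ofList (List.ofFn f) = Ideal.span (Set.range f) := by
  rw [Ideal.ofList]
  congr 1
  ext x
  simp [List.mem_ofFn]

namespace IsLocallyRegularOfCodim

variable {S : Type u} [CommRing S] {J : Ideal S} {c : ℕ}

/-- Locally `S ⧸ J` is the quotient by a regular sequence of length `c`. -/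
lemma hasFiniteRes (h : IsLocallyRegularOfCodim J c) : HasFiniteRes S c (S ⧸ J) := by
  let t : Set S := {g | ∃ f : Fin c → S,
    RingTheory.Sequence.IsRegular (Localization.Away g)
      (List.ofFn fun i => algebraMap S (Localization.Away g) (f i)) ∧
    J.map (algebraMap S (Localization.Away g)) =
      Ideal.span (Set.range fun i => algebraMap S (Localization.Away g) (f i))}
  have ht : Ideal.span t = ⊤ := Ideal.eq_top_of_forall_prime _ fun P hP => by
    obtain ⟨g, hg, hf⟩ := h P hP
    exact ⟨g, Ideal.subset_span hf, hg⟩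
  refine HasFiniteRes.of_localizationSpan t ht
    (fun g => Localization.Away g.1 ⧸ Submodule.localized' (Localization.Away g.1)
      (Submonoid.powers g.1) (Algebra.linearMap S (Localization.Away g.1)) J)
    (fun g => Submodule.toLocalizedQuotient' (Localization.Away g.1)
      (Submonoid.powers g.1) (Algebra.linearMap S (Localization.Away g.1)) J) ?_
  rintro ⟨g, f, hf, hJ⟩
  have := HasFiniteRes.quotient_regular _ hf.toIsWeaklyRegular (HasFiniteRes.of_projective 0)
  rw [List.length_ofFn, zero_add] at this
  refine this.of_equiv (Submodule.quotEquivOfEq _ _ ?_)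
  rw [Ideal.localized'_eq_map, smul_eq_mul, Ideal.mul_top, Ideal.ofList_ofFn]
  exact hJ.symm

end IsLocallyRegularOfCodim

/-! ### Resolutions of the quotient by finite free modules -/

/-- A resolution of `S ⧸ J` by finite free modules `S ^ rk n`, with degree zero term generated by a
lift `e` of `1`, and which splits from degree `c` on: the identity `d r d = d` makes the image of
`d n` a direct summand. -/
structure FreeRes {S : Type u} [CommRing S] (J : Ideal S) (c : ℕ) where
  rk : ℕ → ℕ
  d : ∀ n, (Fin (rk (n + 1)) → S) →ₗ[S] (Fin (rk n) → S)
  ε : (Fin (rk 0) → S) →ₗ[S] S ⧸ J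
  e : Fin (rk 0) → S
  ε_e : ε e = 1
  span_e : ∀ v, ∃ a : S, v = a • e
  exact_zero : Function.Exact (d 0) ε
  exact : ∀ n, Function.Exact (d (n + 1)) (d n)
  split : ∀ n, c ≤ n → ∃ r : (Fin (rk n) → S) →ₗ[S] (Fin (rk (n + 1)) → S),
    d n ∘ₗ r ∘ₗ d n = d n

namespace FreeRes

/-- One step of the construction of a resolution by finite free modules. -/
lemma exists_step {S : Type u} [CommRing S] {m k : ℕ} (K : Submodule S (Fin k → S))
    (h : HasFiniteRes S m ((Fin k → S) ⧸ K)) :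
    ∃ (k' : ℕ) (d : (Fin k' → S) →ₗ[S] (Fin k → S)), LinearMap.range d = K ∧
      HasFiniteRes S (m - 1) ((Fin k' → S) ⧸ LinearMap.ker d) := by
  have hK : HasFiniteRes S (m - 1) K := by
    have h' : HasFiniteRes S (m - 1 + 1) ((Fin k → S) ⧸ K) := by
      cases m with
      | zero => exact h.succ
      | succ m => exact h
    have := h'.ker K.mkQ K.mkQ_surjective
    rwa [K.ker_mkQ] at this
  have := hK.finite
  obtain ⟨k', p, hp⟩ := Module.Finite.exists_fin' S K
  have hr : LinearMap.range (K.subtype ∘ₗ p) = K := by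
    rw [LinearMap.range_comp_of_range_eq_top _ (LinearMap.range_eq_top.2 hp), K.range_subtype]
  refine ⟨k', K.subtype ∘ₗ p, hr, hK.of_equiv ?_⟩
  exact (LinearEquiv.ofEq _ _ hr.symm).trans (LinearMap.quotKerEquivRange _).symm

/-- A submodule `K` of relations in a finite free module with `S ^ k ⧸ K` of finite resolution. -/
structure Stage (S : Type u) [CommRing S] (m : ℕ) where
  k : ℕ
  K : Submodule S (Fin k → S)
  res : HasFiniteRes S m ((Fin k → S) ⧸ K)

/-- The next stage: cover the relations by a finite free module. -/
noncomputable def Stage.next {S : Type u} [CommRing S] {m : ℕ} (s : Stage S m) :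
    Stage S (m - 1) where
  k := (exists_step s.K s.res).choose
  K := LinearMap.ker (exists_step s.K s.res).choose_spec.choose
  res := (exists_step s.K s.res).choose_spec.choose_spec.2

/-- The covering map of the relations. -/
noncomputable def Stage.d {S : Type u} [CommRing S] {m : ℕ} (s : Stage S m) :
    (Fin s.next.k → S) →ₗ[S] (Fin s.k → S) :=
  (exists_step s.K s.res).choose_spec.choose

lemma Stage.range_d {S : Type u} [CommRing S] {m : ℕ} (s : Stage S m) :
    LinearMap.range s.d = s.K :=
  (exists_step s.K s.res).choose_spec.choose_spec.1

lemma Stage.ker_d {S : Type u} [CommRing S] {m : ℕ} (s : Stage S m) :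
    LinearMap.ker s.d = s.next.K := rfl

/-- The stages obtained by iterating `Stage.next`. -/
noncomputable def Stage.seq {S : Type u} [CommRing S] {c : ℕ} (s : Stage S c) :
    ∀ n, Stage S (c - n)
  | 0 => s
  | n + 1 => (Stage.seq s n).next

lemma Stage.exact_d {S : Type u} [CommRing S] {m : ℕ} (s : Stage S m) :
    Function.Exact s.next.d s.d :=
  LinearMap.exact_iff.2 (s.ker_d.trans s.next.range_d.symm)

/-- Once the quotient is projective the resolution splits. -/
lemma Stage.split {S : Type u} [CommRing S] {m : ℕ} (s : Stage S m) (hm : m = 0) :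
    ∃ r : (Fin s.k → S) →ₗ[S] (Fin s.next.k → S), s.d ∘ₗ r ∘ₗ s.d = s.d := by
  subst hm
  have := s.res.2
  -- the relations `K` form a direct summand, so a projection onto `K` lifts along `d`
  obtain ⟨l, hl⟩ := Module.projective_lifting_property s.K.mkQ LinearMap.id s.K.mkQ_surjective
  have hl' : ∀ x, s.K.mkQ (l x) = x := fun x => LinearMap.congr_fun hl x
  let π : (Fin s.k → S) →ₗ[S] LinearMap.range s.d :=
    (LinearMap.id - l ∘ₗ s.K.mkQ).codRestrict _ (fun v => by
      rw [Stage.range_d, ← Submodule.Quotient.mk_eq_zero, ← Submodule.mkQ_apply]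
      simp [hl', -Submodule.mkQ_apply])
  obtain ⟨r, hr⟩ := Module.projective_lifting_property s.d.rangeRestrict π
    s.d.surjective_rangeRestrict
  refine ⟨r, ?_⟩
  refine LinearMap.ext fun v => ?_
  have h1 := congrArg Subtype.val (LinearMap.congr_fun hr (s.d v))
  have h2 : s.K.mkQ (s.d v) = 0 := by
    rw [Submodule.mkQ_apply, Submodule.Quotient.mk_eq_zero, ← Stage.range_d]
    exact ⟨v, rfl⟩
  change s.d (r (s.d v)) = _ - l (s.K.mkQ (s.d v)) at h1
  rw [h2, map_zero, sub_zero] at h1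
  exact h1

/-- Start with `J ⊆ S`, the kernel of the augmentation `S → S ⧸ J`, and iterate `Stage.next`;
after `c` steps the quotients are projective. -/
lemma exists_of_hasFiniteRes {S : Type u} [CommRing S] {J : Ideal S} {c : ℕ}
    (h : HasFiniteRes S c (S ⧸ J)) : Nonempty (FreeRes J c) := by
  let ε : (Fin 1 → S) →ₗ[S] S ⧸ J := J.mkQ ∘ₗ LinearMap.proj 0
  have hε : Function.Surjective ε :=
    J.mkQ_surjective.comp (LinearMap.proj_surjective (R := S) (φ := fun _ : Fin 1 => S) 0)
  let s : Stage S c := ⟨1, LinearMap.ker ε,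
    h.of_equiv (LinearMap.quotKerEquivOfSurjective ε hε).symm⟩
  have h0 : Function.Exact s.d ε := LinearMap.exact_iff.2 s.range_d.symm
  have hspan : ∀ v : Fin 1 → S, ∃ a : S, v = a • (fun _ => 1) := by
    intro v
    refine ⟨v 0, ?_⟩
    funext i
    rw [Subsingleton.elim i 0]
    simp
  exact ⟨{
    rk := fun n => (s.seq n).k
    d := fun n => (s.seq n).d
    ε := ε
    e := fun _ => 1
    ε_e := rfl
    span_e := hspan
    exact_zero := h0
    exact := fun n => (s.seq n).exact_d
    split := fun n hn => (s.seq n).split (Nat.sub_eq_zero_of_le hn) }⟩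

end FreeRes

/-! ### Homotopies on the resolution -/

/-- Maps out of a projective module lift along exact sequences. -/
lemma exists_lift_of_exact {S : Type*} [CommRing S] {X Y Z W : Type*} [AddCommGroup X]
    [Module S X] [Module.Projective S X] [AddCommGroup Y] [Module S Y] [AddCommGroup Z]
    [Module S Z] [AddCommGroup W] [Module S W] (f : Y →ₗ[S] Z) (g : Z →ₗ[S] W)
    (hfg : Function.Exact f g) (k : X →ₗ[S] Z) (hk : g ∘ₗ k = 0) :
    ∃ l : X →ₗ[S] Y, k = f ∘ₗ l := by
  obtain ⟨l, hl⟩ := Module.projective_lifting_property f.rangeRestrict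
    (k.codRestrict (LinearMap.range f) fun x => (hfg _).1 (LinearMap.congr_fun hk x))
    f.surjective_rangeRestrict
  exact ⟨l, LinearMap.ext fun x => (congrArg Subtype.val (LinearMap.congr_fun hl x)).symm⟩

/-- The fundamental lemma of homological algebra: a family of maps from a complex of projectives
to an acyclic augmented complex which commutes with the differentials up to the scalar `σ` is
null-homotopic. Maps of odd degree need `σ = -1`. -/
lemma exists_nullHomotopy {S : Type*} [CommRing S] {F A : ℕ → Type*} {A' : Type*}
    [∀ n, AddCommGroup (F n)] [∀ n, Module S (F n)] [∀ n, Module.Projective S (F n)]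
    [∀ n, AddCommGroup (A n)] [∀ n, Module S (A n)] [AddCommGroup A'] [Module S A']
    (d : ∀ n, F (n + 1) →ₗ[S] F n) (hd : ∀ n, d n ∘ₗ d (n + 1) = 0)
    (a' : A 0 →ₗ[S] A') (a : ∀ n, A (n + 1) →ₗ[S] A n)
    (ha' : Function.Exact (a 0) a') (ha : ∀ n, Function.Exact (a (n + 1)) (a n)) (σ : S)
    (t : ∀ n, F n →ₗ[S] A n) (ht' : a' ∘ₗ t 0 = 0)
    (ht : ∀ n, a n ∘ₗ t (n + 1) = σ • t n ∘ₗ d n) :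
    ∃ h : ∀ n, F n →ₗ[S] A (n + 1), t 0 = a 0 ∘ₗ h 0 ∧
      ∀ n, t (n + 1) = a (n + 1) ∘ₗ h (n + 1) + σ • h n ∘ₗ d n := by
  let P (n : ℕ) : Type _ := {h : F n →ₗ[S] A (n + 1) // (t n - a n ∘ₗ h) ∘ₗ d n = 0}
  obtain ⟨h₀, hh₀⟩ := exists_lift_of_exact (a 0) a' ha' (t 0) ht'
  have step : ∀ n (h : P n), ∃ h' : P (n + 1),
      t (n + 1) = a (n + 1) ∘ₗ h'.1 + σ • h.1 ∘ₗ d n := by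
    rintro n ⟨h, hh⟩
    obtain ⟨h', hh'⟩ := exists_lift_of_exact (a (n + 1)) (a n) (ha n) (t (n + 1) - σ • h ∘ₗ d n) (by
      rw [LinearMap.comp_sub, ht, LinearMap.comp_smul, ← smul_sub, ← LinearMap.comp_assoc,
        ← LinearMap.sub_comp, hh, smul_zero])
    refine ⟨⟨h', ?_⟩, ?_⟩
    · rw [← hh', sub_sub_cancel, LinearMap.smul_comp, LinearMap.comp_assoc, hd,
        LinearMap.comp_zero, smul_zero]
    · change _ = a (n + 1) ∘ₗ h' + _
      rw [← hh', sub_add_cancel]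
  choose next hnext using step
  let s : ∀ n, P n := fun n => Nat.rec ⟨h₀, by rw [← hh₀, sub_self, LinearMap.zero_comp]⟩ next n
  exact ⟨fun n => (s n).1, hh₀, fun n => hnext n (s n)⟩

namespace FreeRes

variable {S : Type u} [CommRing S] {J : Ideal S} {c : ℕ} (R : FreeRes J c)

/-- The `n`-th term of the resolution. -/
abbrev F (n : ℕ) : Type u := Fin (R.rk n) → S

lemma d_comp_d (n : ℕ) : R.d n ∘ₗ R.d (n + 1) = 0 := (R.exact n).linearMap_comp_eq_zero

lemma d_d (n : ℕ) (v : R.F (n + 2)) : R.d n (R.d (n + 1) v) = 0 :=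
  LinearMap.congr_fun (R.d_comp_d n) v

/-- Multiplication by `x ∈ J` is zero on `S ⧸ J`, hence null-homotopic on its resolution. -/
lemma exists_homotopy (x : J) : ∃ s : ∀ n, R.F n →ₗ[S] R.F (n + 1),
    R.d 0 ∘ₗ s 0 = (x : S) • LinearMap.id ∧
    ∀ n, R.d (n + 1) ∘ₗ s (n + 1) + s n ∘ₗ R.d n = (x : S) • LinearMap.id := by
  obtain ⟨h, h0, h1⟩ := exists_nullHomotopy (F := R.F) (A := R.F) R.d R.d_comp_d R.ε R.d
    R.exact_zero R.exact 1 (fun n => (x : S) • LinearMap.id) (by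
      refine LinearMap.ext fun v => ?_
      have : ∀ b : S ⧸ J, (x : S) • b = 0 := fun b => by
        rw [Algebra.smul_def, Ideal.Quotient.algebraMap_eq, Ideal.Quotient.eq_zero_iff_mem.2 x.2,
          zero_mul]
      simp [this]) (fun n => LinearMap.ext fun v => by simp)
  exact ⟨h, h0.symm, fun n => by rw [h1 n, one_smul]⟩

/-- A homotopy between multiplication by `x ∈ J` on the resolution and zero. -/
noncomputable def s (x : J) : ∀ n, R.F n →ₗ[S] R.F (n + 1) := (R.exists_homotopy x).choose

lemma d_s_zero (x : J) (v : R.F 0) : R.d 0 (R.s x 0 v) = (x : S) • v :=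
  LinearMap.congr_fun (R.exists_homotopy x).choose_spec.1 v

lemma d_s (x : J) (n : ℕ) (v : R.F (n + 1)) :
    R.d (n + 1) (R.s x (n + 1) v) = (x : S) • v - R.s x n (R.d n v) :=
  eq_sub_of_add_eq (LinearMap.congr_fun ((R.exists_homotopy x).choose_spec.2 n) v)

/-- A degree one map anticommuting with `d` is null-homotopic. -/
lemma exists_null_one (t : ∀ n, R.F n →ₗ[S] R.F (n + 1)) (h0 : ∀ v, R.d 0 (t 0 v) = 0)
    (h1 : ∀ n v, R.d (n + 1) (t (n + 1) v) = - t n (R.d n v)) :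
    ∃ h : ∀ n, R.F n →ₗ[S] R.F (n + 2), (∀ v, t 0 v = R.d 1 (h 0 v)) ∧
      ∀ n v, t (n + 1) v = R.d (n + 2) (h (n + 1) v) - h n (R.d n v) := by
  obtain ⟨h, e0, e1⟩ := exists_nullHomotopy (F := R.F) (A := fun n => R.F (n + 1)) R.d
    R.d_comp_d (R.d 0) (fun n => R.d (n + 1)) (R.exact 0) (fun n => R.exact (n + 1)) (-1) t
    (LinearMap.ext h0) (fun n => LinearMap.ext fun v => by simp [h1])
  refine ⟨h, LinearMap.congr_fun e0, fun n v => ?_⟩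
  rw [e1]
  simp [sub_eq_add_neg]

/-- A degree two map commuting with `d` is null-homotopic. -/
lemma exists_null_two (t : ∀ n, R.F n →ₗ[S] R.F (n + 2)) (h0 : ∀ v, R.d 1 (t 0 v) = 0)
    (h1 : ∀ n v, R.d (n + 2) (t (n + 1) v) = t n (R.d n v)) :
    ∃ h : ∀ n, R.F n →ₗ[S] R.F (n + 3), (∀ v, t 0 v = R.d 2 (h 0 v)) ∧
      ∀ n v, t (n + 1) v = R.d (n + 3) (h (n + 1) v) + h n (R.d n v) := by
  obtain ⟨h, e0, e1⟩ := exists_nullHomotopy (F := R.F) (A := fun n => R.F (n + 2)) R.d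
    R.d_comp_d (R.d 1) (fun n => R.d (n + 2)) (R.exact 1) (fun n => R.exact (n + 2)) 1 t
    (LinearMap.ext h0) (fun n => LinearMap.ext fun v => by simp [h1])
  refine ⟨h, LinearMap.congr_fun e0, fun n v => ?_⟩
  rw [e1]
  simp

end FreeRes

/-! ### Contractions along a regular sequence -/

section
open scoped Pointwise

/-- Membership in `(x, L) N` can be tested modulo `x`. -/
lemma mkQ_mem_ofList_smul_top_iff {S : Type*} [CommRing S] {N : Type*} [AddCommGroup N]
    [Module S N] (x : S) (L : List S) (v : N) :
    (x • (⊤ : Submodule S N)).mkQ v ∈ Ideal.ofList L • (⊤ : Submodule S (QuotSMulTop x N)) ↔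
      v ∈ Ideal.ofList (x :: L) • (⊤ : Submodule S N) := by
  have h : Ideal.ofList L • (⊤ : Submodule S (QuotSMulTop x N)) =
      (Ideal.ofList L • (⊤ : Submodule S N)).map (x • (⊤ : Submodule S N)).mkQ := by
    rw [Submodule.map_smul'', Submodule.map_top, Submodule.range_mkQ]
  rw [h, ← Submodule.mem_comap, Submodule.comap_map_eq, Submodule.ker_mkQ, Ideal.ofList_cons,
    Submodule.sup_smul, Submodule.ideal_span_singleton_smul, sup_comm]

/-- A map from a projective module which vanishes modulo `x` is divisible by `x`. -/
lemma exists_eq_smul_of_mkQ_comp_eq_zero {S : Type*} [CommRing S] {X N : Type*} [AddCommGroup N]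
    [Module S N] [AddCommGroup X] [Module S X] [Module.Projective S X] (x : S) (ψ : X →ₗ[S] N)
    (h : (x • (⊤ : Submodule S N)).mkQ ∘ₗ ψ = 0) : ∃ χ : X →ₗ[S] N, ψ = x • χ := by
  obtain ⟨χ, hχ⟩ := exists_lift_of_exact (LinearMap.lsmul S N x) (x • (⊤ : Submodule S N)).mkQ
    (fun v => by
      rw [Submodule.mkQ_apply, Submodule.Quotient.mk_eq_zero,
        Submodule.mem_smul_pointwise_iff_exists]
      simp) ψ h
  exact ⟨χ, hχ⟩

namespace FreeRes

variable {S : Type u} [CommRing S] {J : Ideal S} {c : ℕ} (R : FreeRes J c)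
variable {N : Type v} [AddCommGroup N] [Module S N]

/-- The cochain `φ` is a coboundary. -/
def IsCob : ∀ {n : ℕ}, (R.F n →ₗ[S] N) → Prop
  | 0, φ => φ = 0
  | n + 1, φ => ∃ χ : R.F n →ₗ[S] N, φ = χ ∘ₗ R.d n

variable {R} in
lemma IsCob.comp {N' : Type*} [AddCommGroup N'] [Module S N'] (q : N →ₗ[S] N') {n : ℕ}
    {φ : R.F n →ₗ[S] N} (h : R.IsCob φ) : R.IsCob (q ∘ₗ φ) := by
  cases n with
  | zero => exact (congrArg (q ∘ₗ ·) h).trans (LinearMap.comp_zero _)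
  | succ n =>
    obtain ⟨χ, rfl⟩ := h
    exact ⟨q ∘ₗ χ, rfl⟩

/-- Contraction of a cochain with the homotopies of the elements of `L`, the first element of `L`
being applied first. -/
noncomputable def conRev : ∀ L : List J, (R.F L.length →ₗ[S] N) → (R.F 0 →ₗ[S] N)
  | [], φ => φ
  | x :: L, φ => conRev L (φ ∘ₗ R.s x L.length)

lemma conRev_comp {N' : Type*} [AddCommGroup N'] [Module S N'] (q : N →ₗ[S] N') (L : List J)
    (φ : R.F L.length →ₗ[S] N) : R.conRev L (q ∘ₗ φ) = q ∘ₗ R.conRev L φ := by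
  induction L with
  | nil => rfl
  | cons x L ih => exact ih (φ ∘ₗ R.s x L.length)

lemma conRev_add (L : List J) (φ ψ : R.F L.length →ₗ[S] N) :
    R.conRev L (φ + ψ) = R.conRev L φ + R.conRev L ψ := by
  induction L with
  | nil => rfl
  | cons x L ih => simp only [conRev, LinearMap.add_comp, ih]

lemma conRev_smul (L : List J) (a : S) (φ : R.F L.length →ₗ[S] N) :
    R.conRev L (a • φ) = a • R.conRev L φ := by
  induction L with
  | nil => rfl
  | cons x L ih => simp only [conRev, LinearMap.smul_comp, ih]

lemma conRev_sub (L : List J) (φ ψ : R.F L.length →ₗ[S] N) :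
    R.conRev L (φ - ψ) = R.conRev L φ - R.conRev L ψ := by
  rw [eq_sub_iff_add_eq, ← conRev_add, sub_add_cancel]

/-- The ideal generated by the elements of `L`, times `N`. -/
def listSMul (N : Type v) [AddCommGroup N] [Module S N] (L : List J) : Submodule S N :=
  Ideal.ofList (L.map Subtype.val) • ⊤

lemma mkQ_mem_listSMul_iff (x : J) (L : List J) (v : N) :
    ((x : S) • (⊤ : Submodule S N)).mkQ v ∈ listSMul (QuotSMulTop (x : S) N) L ↔
      v ∈ listSMul N (x :: L) :=
  mkQ_mem_ofList_smul_top_iff (x : S) _ v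

lemma smul_mem_listSMul (x : J) (L : List J) (v : N) : (x : S) • v ∈ listSMul N (x :: L) := by
  rw [← mkQ_mem_listSMul_iff, Submodule.mkQ_apply, (Submodule.Quotient.mk_eq_zero _).2
    (Submodule.smul_mem_pointwise_smul v _ ⊤ trivial)]
  exact zero_mem _

lemma listSMul_le (x : J) (L : List J) : listSMul N L ≤ listSMul N (x :: L) := by
  refine Submodule.smul_mono_left ?_
  rw [List.map_cons, Ideal.ofList_cons]
  exact le_sup_right

/-- Contractions of coboundaries vanish modulo the ideal. -/
lemma IsCob.conRev_mem {L : List J} {φ : R.F L.length →ₗ[S] N} (h : R.IsCob φ) (v : R.F 0) :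
    R.conRev L φ v ∈ listSMul N L := by
  induction L with
  | nil =>
    have h : φ = 0 := h
    rw [h]
    exact zero_mem _
  | cons x L ih =>
    obtain ⟨χ, rfl⟩ := h
    change R.conRev L ((χ ∘ₗ R.d L.length) ∘ₗ R.s x L.length) v ∈ _
    have key : ∃ θ : R.F L.length →ₗ[S] N, R.IsCob θ ∧
        (χ ∘ₗ R.d L.length) ∘ₗ R.s x L.length = (x : S) • χ - θ := by
      generalize L.length = m at χ
      cases m with
      | zero => exact ⟨0, rfl, LinearMap.ext fun v => by simp [d_s_zero]⟩
      | succ m =>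
        exact ⟨_, ⟨χ ∘ₗ R.s x m, rfl⟩, LinearMap.ext fun v => by simp [d_s]⟩
    obtain ⟨θ, hθ, e⟩ := key
    rw [e, conRev_sub, conRev_smul]
    exact sub_mem (smul_mem_listSMul x L _) (listSMul_le x L (ih hθ))

/-- A cochain that is a coboundary modulo `x` has the same coboundary as a multiple of `x`: lift a
primitive along the projection and subtract its coboundary. -/
lemma exists_comp_d_eq_smul_comp_d (x : S) {m : ℕ} (ψ : R.F m →ₗ[S] N)
    (h : R.IsCob ((x • (⊤ : Submodule S N)).mkQ ∘ₗ ψ)) :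
    ∃ χ : R.F m →ₗ[S] N, ψ ∘ₗ R.d m = (x • χ) ∘ₗ R.d m := by
  cases m with
  | zero =>
    obtain ⟨χ, hχ⟩ := exists_eq_smul_of_mkQ_comp_eq_zero x _ h
    exact ⟨χ, by rw [hχ]⟩
  | succ m =>
    obtain ⟨ξ', hξ'⟩ := h
    obtain ⟨ξ, rfl⟩ := Module.projective_lifting_property
      (x • (⊤ : Submodule S N)).mkQ ξ' (Submodule.mkQ_surjective _)
    obtain ⟨χ, hχ⟩ := exists_eq_smul_of_mkQ_comp_eq_zero x (ψ - ξ ∘ₗ R.d m) (by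
      rw [LinearMap.comp_sub, hξ', LinearMap.comp_assoc, sub_self])
    refine ⟨χ, ?_⟩
    rw [← hχ, LinearMap.sub_comp, LinearMap.comp_assoc _ _ ξ, d_comp_d, LinearMap.comp_zero,
      sub_zero]

/-- The descent step. For a cocycle `φ` one has `x • φ = (φ ∘ s x) ∘ d`; if `φ ∘ s x` is a
coboundary modulo `x`, the right hand side is also `x` times a coboundary, and `x` cancels. -/
lemma isCob_of_comp_s {x : J} (hx : IsSMulRegular N (x : S)) {m : ℕ} (φ : R.F (m + 1) →ₗ[S] N)
    (hφ : φ ∘ₗ R.d (m + 1) = 0)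
    (h : R.IsCob (((x : S) • (⊤ : Submodule S N)).mkQ ∘ₗ φ ∘ₗ R.s x m)) : R.IsCob φ := by
  obtain ⟨χ, hχ⟩ := R.exists_comp_d_eq_smul_comp_d (x : S) (φ ∘ₗ R.s x m) h
  refine ⟨χ, LinearMap.ext fun v => hx ?_⟩
  have h1 : φ (R.d (m + 1) (R.s x (m + 1) v)) = 0 := LinearMap.congr_fun hφ _
  rw [d_s, map_sub, map_smul, sub_eq_zero] at h1
  exact h1.trans (LinearMap.congr_fun hχ v)

/-- The contraction of a cocycle by `x` is a cocycle modulo `x`. -/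
lemma mkQ_comp_s_comp_d (x : J) {m : ℕ} (φ : R.F (m + 1) →ₗ[S] N)
    (hφ : φ ∘ₗ R.d (m + 1) = 0) :
    (((x : S) • (⊤ : Submodule S N)).mkQ ∘ₗ φ ∘ₗ R.s x m) ∘ₗ R.d m = 0 := by
  refine LinearMap.ext fun v => ?_
  have h1 : φ (R.d (m + 1) (R.s x (m + 1) v)) = 0 := LinearMap.congr_fun hφ _
  rw [d_s, map_sub, map_smul, sub_eq_zero] at h1
  change Submodule.mkQ _ (φ (R.s x m (R.d m v))) = 0
  rw [← h1, Submodule.mkQ_apply, Submodule.Quotient.mk_eq_zero]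
  exact Submodule.smul_mem_pointwise_smul _ _ _ trivial

/-- Cocycles of degree less than the length of a weakly regular sequence are coboundaries. -/
lemma isCob_of_lt {L : List J}
    (hL : RingTheory.Sequence.IsWeaklyRegular N (L.map Subtype.val)) {i : ℕ}
    (hi : i < L.length) (φ : R.F i →ₗ[S] N) (hφ : φ ∘ₗ R.d i = 0) : R.IsCob φ := by
  induction L generalizing N i with
  | nil => simp at hi
  | cons x L ih =>
    rw [List.map_cons, RingTheory.Sequence.isWeaklyRegular_cons_iff] at hL
    cases i with
    | zero =>
      refine LinearMap.ext fun v => hL.1 ?_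
      have := LinearMap.congr_fun hφ (R.s x 0 v)
      rw [LinearMap.comp_apply, d_s_zero, map_smul] at this
      simpa using this
    | succ m =>
      exact R.isCob_of_comp_s hL.1 φ hφ
        (ih hL.2 (by simpa using hi) _ (R.mkQ_comp_s_comp_d x φ hφ))

/-- A cocycle in the critical degree with vanishing contraction is a coboundary. -/
lemma isCob_of_conRev {L : List J}
    (hL : RingTheory.Sequence.IsWeaklyRegular N (L.map Subtype.val))
    (φ : R.F L.length →ₗ[S] N) (hφ : φ ∘ₗ R.d L.length = 0)
    (h : ∀ v, R.conRev L φ v ∈ listSMul N L) : R.IsCob φ := by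
  induction L generalizing N with
  | nil => exact LinearMap.ext fun v => by simpa [listSMul, conRev] using h v
  | cons x L ih =>
    rw [List.map_cons, RingTheory.Sequence.isWeaklyRegular_cons_iff] at hL
    refine R.isCob_of_comp_s hL.1 φ hφ (ih hL.2 _ (R.mkQ_comp_s_comp_d x φ hφ) fun v => ?_)
    rw [conRev_comp]
    exact (mkQ_mem_listSMul_iff x L _).2 (h v)

/-- Every class modulo the ideal is the contraction of a cocycle in the critical degree. -/
lemma exists_conRev_sub_mem {L : List J}
    (hL : RingTheory.Sequence.IsWeaklyRegular N (L.map Subtype.val))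
    (ψ : R.F 0 →ₗ[S] N) (hψ : ∀ v, ψ (R.d 0 v) ∈ listSMul N L) :
    ∃ φ : R.F L.length →ₗ[S] N, φ ∘ₗ R.d L.length = 0 ∧
      ∀ v, R.conRev L φ v - ψ v ∈ listSMul N L := by
  induction L generalizing N with
  | nil =>
    exact ⟨ψ, LinearMap.ext fun v => by simpa [listSMul] using hψ v, fun v => by simp [conRev]⟩
  | cons x L ih =>
    rw [List.map_cons, RingTheory.Sequence.isWeaklyRegular_cons_iff] at hL
    obtain ⟨φ', hφ', h'⟩ := ih hL.2 (((x : S) • (⊤ : Submodule S N)).mkQ ∘ₗ ψ)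
      (fun v => (mkQ_mem_listSMul_iff x L _).2 (hψ v))
    obtain ⟨θ, rfl⟩ := Module.projective_lifting_property
      ((x : S) • (⊤ : Submodule S N)).mkQ φ' (Submodule.mkQ_surjective _)
    obtain ⟨φ, hφ⟩ := exists_eq_smul_of_mkQ_comp_eq_zero (x : S) (θ ∘ₗ R.d L.length) (by
      rw [← hφ', LinearMap.comp_assoc])
    have hφ0 : ∀ v, (x : S) • φ v = θ (R.d L.length v) :=
      fun v => (LinearMap.congr_fun hφ v).symm
    -- `φ = x⁻¹ θ d` is the image of the cocycle `θ mod x` under the connecting map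
    refine ⟨φ, LinearMap.ext fun v => hL.1 ?_, fun v => ?_⟩
    · change (x : S) • φ (R.d (L.length + 1) v) = (x : S) • 0
      rw [hφ0, d_d, map_zero, smul_zero]
    -- contracting `φ` by `x` gives back `θ`, up to a coboundary
    have key : R.IsCob (θ - φ ∘ₗ R.s x L.length) := by
      have hlt : ∀ i, i < L.length → ∀ φ : R.F i →ₗ[S] QuotSMulTop (x : S) N,
          φ ∘ₗ R.d i = 0 → R.IsCob φ := fun i hi => R.isCob_of_lt hL.2 hi
      clear h' hφ' ih
      generalize L.length = m at *
      cases m with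
      | zero =>
        refine LinearMap.ext fun v => hL.1 ?_
        change (x : S) • (θ v - φ (R.s x 0 v)) = (x : S) • 0
        rw [smul_sub, hφ0, d_s_zero, map_smul, sub_self, smul_zero]
      | succ m =>
        have e : ∀ v, (x : S) • (θ v - φ (R.s x (m + 1) v)) = θ (R.s x m (R.d m v)) := by
          intro v
          rw [smul_sub, hφ0, d_s, map_sub, map_smul, sub_sub_cancel]
        -- `θ s d` is divisible by `x`, so `θ s` is a cocycle modulo `x`, of subcritical degree
        have hη := hlt m (by simp) (((x : S) • (⊤ : Submodule S N)).mkQ ∘ₗ θ ∘ₗ R.s x m) (by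
          refine LinearMap.ext fun v => ?_
          change Submodule.mkQ _ (θ (R.s x m (R.d m v))) = 0
          rw [← e, Submodule.mkQ_apply, Submodule.Quotient.mk_eq_zero]
          exact Submodule.smul_mem_pointwise_smul _ _ _ trivial)
        obtain ⟨χ, hχ⟩ := R.exists_comp_d_eq_smul_comp_d (x : S) (θ ∘ₗ R.s x m) hη
        refine ⟨χ, LinearMap.ext fun v => hL.1 ?_⟩
        exact (e v).trans (LinearMap.congr_fun hχ v)
    rw [← mkQ_mem_listSMul_iff]
    have h1 := (key.comp (((x : S) • (⊤ : Submodule S N)).mkQ)).conRev_mem R v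
    have h2 := h' v
    have := sub_mem h2 h1
    rw [LinearMap.comp_sub, conRev_sub, LinearMap.sub_apply, sub_sub_sub_cancel_left,
      conRev_comp] at this
    rw [map_sub]
    exact this

end FreeRes
end

/-! ### Regular sequences inside the ideal -/

section
open scoped Pointwise

/-- Weak regularity of a sequence is unaffected by multiplying its terms by units. -/
lemma isWeaklyRegular_of_forall₂_isUnit {A : Type*} [CommRing A] {M : Type*} [AddCommGroup M]
    [Module A M] {as bs : List A}
    (h : List.Forall₂ (fun a b => ∃ w : A, IsUnit w ∧ b = w * a) as bs)
    (ha : RingTheory.Sequence.IsWeaklyRegular M as) :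
    RingTheory.Sequence.IsWeaklyRegular M bs := by
  induction h generalizing M with
  | nil => exact RingTheory.Sequence.IsWeaklyRegular.nil A M
  | @cons a b as bs hab _ ih =>
    rw [RingTheory.Sequence.isWeaklyRegular_cons_iff] at ha ⊢
    obtain ⟨w, hw, rfl⟩ := hab
    have e : a • (⊤ : Submodule A M) = (w * a) • ⊤ := by
      rw [← Submodule.ideal_span_singleton_smul, ← Submodule.ideal_span_singleton_smul,
        Ideal.span_singleton_mul_left_unit hw]
    exact ⟨(hw.isSMulRegular M).mul ha.1,
      ((Submodule.quotEquivOfEq _ _ e).isWeaklyRegular_congr bs).1 (ih ha.2)⟩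

/-- A uniform power of the inverted element carries a finitely generated ideal into another one
containing it after localization. -/
lemma exists_pow_mul_mem {A : Type*} [CommRing A] (g : A) {I K : Ideal A} (hI : I.FG)
    (h : I.map (algebraMap A (Localization.Away g)) ≤ K.map (algebraMap A (Localization.Away g))) :
    ∃ m : ℕ, ∀ x ∈ I, g ^ m * x ∈ K := by
  have h1 : ∀ x ∈ I, ∃ m : ℕ, g ^ m * x ∈ K := by
    intro x hx
    obtain ⟨⟨k, ⟨_, n, rfl⟩⟩, hk⟩ := (IsLocalization.mem_map_algebraMap_iff (Submonoid.powers g)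
      (Localization.Away g)).1 (h (Ideal.mem_map_of_mem _ hx))
    rw [← map_mul, IsLocalization.eq_iff_exists (Submonoid.powers g)] at hk
    obtain ⟨⟨_, n', rfl⟩, hk⟩ := hk
    refine ⟨n' + n, ?_⟩
    have := K.mul_mem_left (g ^ n') k.2
    rw [← show g ^ n' * (x * g ^ n) = _ from hk] at this
    convert this using 1
    ring
  obtain ⟨t, rfl⟩ := hI
  choose! n hn using fun x (hx : x ∈ t) => h1 x (Ideal.subset_span hx)
  refine ⟨t.sup n, fun x hx => ?_⟩
  induction hx using Submodule.span_induction with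
  | mem x hx =>
    rw [← Nat.sub_add_cancel (Finset.le_sup hx : n x ≤ t.sup n), pow_add, mul_assoc]
    exact K.mul_mem_left _ (hn x hx)
  | zero => rw [mul_zero]; exact K.zero_mem
  | add x y _ _ hx hy => rw [mul_add]; exact K.add_mem hx hy
  | smul a x _ hx => rw [smul_eq_mul, mul_left_comm]; exact K.mul_mem_left _ hx

namespace IsLocallyRegularOfCodim

variable {S : Type u} [CommRing S] {J : Ideal S} {c : ℕ}

/-- `J` is the first syzygy of a module with a resolution by finite projective modules. -/
lemma fg (h : IsLocallyRegularOfCodim J c) : J.FG := by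
  have h' : HasFiniteRes S (c - 1) J := by
    have h' : HasFiniteRes S (c - 1 + 1) (S ⧸ J) := by
      have := h.hasFiniteRes
      cases c with
      | zero => exact this.succ
      | succ m => exact this
    have := h'.ker J.mkQ J.mkQ_surjective
    rwa [J.ker_mkQ] at this
  exact (Module.Finite.iff_fg).1 h'.finite

/-- The local regular sequence, given in a localization of `S`, can be rescaled by powers of `g`
to lie in `J` itself; it then generates `J` up to a power of `g`. -/
lemma exists_list (h : IsLocallyRegularOfCodim J c) (P : Ideal S) (hP : P.IsPrime) :
    ∃ g ∉ P, ∃ L : List J, L.length = c ∧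
      RingTheory.Sequence.IsWeaklyRegular (Localization.Away g) (L.map Subtype.val) ∧
      ∃ m : ℕ, ∀ x ∈ J, g ^ m * x ∈ Ideal.ofList (L.map Subtype.val) := by
  obtain ⟨g, hg, f, hf, hJ⟩ := h P hP
  have hg' : IsUnit (algebraMap S (Localization.Away g) g) :=
    IsLocalization.Away.algebraMap_isUnit g
  have h1 : ∀ i, ∃ n : ℕ, g ^ n * f i ∈ J := by
    intro i
    have : algebraMap S (Localization.Away g) (f i) ∈ J.map (algebraMap S (Localization.Away g)) :=
      hJ ▸ Ideal.subset_span ⟨i, rfl⟩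
    rw [← Ideal.span_singleton_le_iff_mem, ← Set.image_singleton, ← Ideal.map_span] at this
    obtain ⟨n, hn⟩ := exists_pow_mul_mem g (Submodule.fg_span_singleton (f i)) this
    exact ⟨n, hn _ (Ideal.mem_span_singleton_self _)⟩
  choose n hn using h1
  let L : List J := List.ofFn fun i => ⟨g ^ n i * f i, hn i⟩
  have hL : L.map Subtype.val = List.ofFn fun i => g ^ n i * f i := List.map_ofFn
  refine ⟨g, hg, L, List.length_ofFn, ?_, exists_pow_mul_mem g h.fg ?_⟩
  · rw [hL, ← RingTheory.Sequence.isWeaklyRegular_map_algebraMap_iff (Localization.Away g)]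
    refine isWeaklyRegular_of_forall₂_isUnit ?_ hf.toIsWeaklyRegular
    rw [List.map_ofFn, List.forall₂_iff_get]
    refine ⟨by simp, fun i h₁ h₂ => ?_⟩
    simp only [List.get_ofFn, Function.comp_apply]
    exact ⟨_, hg'.pow (n ⟨i, by simpa using h₁⟩), by simp⟩
  · rw [hJ, Ideal.span_le]
    rintro _ ⟨i, rfl⟩
    refine (Ideal.unit_mul_mem_iff_mem _ (hg'.pow (n i))).1 ?_
    rw [← map_pow, ← map_mul, hL]
    refine Ideal.mem_map_of_mem _ ?_
    rw [Ideal.ofList_ofFn]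
    exact Ideal.subset_span ⟨i, rfl⟩

end IsLocallyRegularOfCodim
end

/-! ### Exactness of the dual of the resolution, from local to global -/

namespace FreeRes

variable {S : Type u} [CommRing S] {J : Ideal S} {c : ℕ} (R : FreeRes J c)

section
variable {N : Type v} [AddCommGroup N] [Module S N]

variable {R} in
lemma IsCob.add {n : ℕ} {φ ψ : R.F n →ₗ[S] N} (hφ : R.IsCob φ) (hψ : R.IsCob ψ) :
    R.IsCob (φ + ψ) := by
  cases n with
  | zero =>
    obtain rfl : φ = 0 := hφ
    obtain rfl : ψ = 0 := hψ
    exact add_zero 0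
  | succ n =>
    obtain ⟨χ, rfl⟩ := hφ
    obtain ⟨θ, rfl⟩ := hψ
    exact ⟨χ + θ, rfl⟩

variable {R} in
lemma IsCob.smul {n : ℕ} {φ : R.F n →ₗ[S] N} (hφ : R.IsCob φ) (a : S) : R.IsCob (a • φ) := by
  cases n with
  | zero =>
    obtain rfl : φ = 0 := hφ
    exact smul_zero a
  | succ n =>
    obtain ⟨χ, rfl⟩ := hφ
    exact ⟨a • χ, rfl⟩

lemma isCob_zero {n : ℕ} : R.IsCob (0 : R.F n →ₗ[S] N) := by
  cases n with
  | zero => rfl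
  | succ n => exact ⟨0, rfl⟩

end

section
variable (g : S)

/-- Up to a power of `g`, a map to the localization comes from a map to `S`. -/
lemma exists_pow_smul_lift {k : ℕ} (φ : (Fin k → S) →ₗ[S] Localization.Away g) :
    ∃ (n : ℕ) (ψ : (Fin k → S) →ₗ[S] S),
      Algebra.linearMap S (Localization.Away g) ∘ₗ ψ = g ^ n • φ := by
  obtain ⟨ψ, ⟨_, n, rfl⟩, h⟩ := Module.FinitePresentation.exists_lift_of_isLocalizedModule
    (Submonoid.powers g) (Algebra.linearMap S (Localization.Away g)) φ
  exact ⟨n, ψ, h⟩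

lemma exists_pow_smul_eq_zero {k : ℕ} (ψ : (Fin k → S) →ₗ[S] S)
    (h : Algebra.linearMap S (Localization.Away g) ∘ₗ ψ = 0) : ∃ n : ℕ, g ^ n • ψ = 0 := by
  obtain ⟨⟨_, n, rfl⟩, h⟩ := Module.Finite.exists_smul_of_comp_eq_of_isLocalizedModule
    (Submonoid.powers g) (Algebra.linearMap S (Localization.Away g)) ψ 0
    (by rw [h, LinearMap.comp_zero])
  exact ⟨n, h.trans (smul_zero _)⟩

/-- A cochain which becomes a coboundary after inverting `g` is one after multiplication by a
power of `g`. -/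
lemma exists_isCob_pow_smul {n : ℕ} (φ : R.F n →ₗ[S] S)
    (h : R.IsCob (Algebra.linearMap S (Localization.Away g) ∘ₗ φ)) :
    ∃ k : ℕ, R.IsCob (g ^ k • φ) := by
  cases n with
  | zero => exact exists_pow_smul_eq_zero g φ h
  | succ n =>
    obtain ⟨χ, hχ⟩ := h
    obtain ⟨a, χ', hχ'⟩ := exists_pow_smul_lift g χ
    obtain ⟨b, hb⟩ := exists_pow_smul_eq_zero g (g ^ a • φ - χ' ∘ₗ R.d n) (by
      rw [LinearMap.comp_sub, LinearMap.comp_smul, hχ, ← LinearMap.comp_assoc, hχ',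
        LinearMap.smul_comp, sub_self])
    refine ⟨b + a, g ^ b • χ', ?_⟩
    rw [smul_sub, sub_eq_zero, smul_smul, ← pow_add] at hb
    rw [hb, LinearMap.smul_comp]

end

/-- Being a coboundary is a Zariski-local condition on a cochain. -/
lemma isCob_of_local {n : ℕ} (φ : R.F n →ₗ[S] S)
    (h : ∀ P : Ideal S, P.IsPrime → ∃ g ∉ P,
      R.IsCob (Algebra.linearMap S (Localization.Away g) ∘ₗ φ)) : R.IsCob φ := by
  -- the ideal of multipliers making `φ` a coboundary is contained in no prime
  let I : Ideal S :=
    { carrier := {a | R.IsCob (a • φ)}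
      add_mem' := fun {a b} ha hb => by
        change R.IsCob _
        rw [add_smul]
        exact IsCob.add ha hb
      zero_mem' := by
        change R.IsCob _
        rw [zero_smul]
        exact R.isCob_zero
      smul_mem' := fun a b hb => by
        change R.IsCob _
        rw [smul_assoc]
        exact IsCob.smul hb a }
  have hI : I = ⊤ := Ideal.eq_top_of_forall_prime I fun P hP => by
    obtain ⟨g, hg, hφ⟩ := h P hP
    obtain ⟨k, hk⟩ := R.exists_isCob_pow_smul g φ hφ
    exact ⟨g ^ k, hk, fun hk => hg (hP.mem_of_pow_mem k hk)⟩
  have h1 : (1 : S) ∈ I := hI ▸ Submodule.mem_top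
  have h1 : R.IsCob ((1 : S) • φ) := h1
  rwa [one_smul] at h1

/-- Below the critical degree the dual of the resolution is exact. -/
lemma isCob_of_lt_codim (hJ : IsLocallyRegularOfCodim J c) {i : ℕ} (hi : i < c)
    (φ : R.F i →ₗ[S] S) (hφ : φ ∘ₗ R.d i = 0) : R.IsCob φ := by
  refine R.isCob_of_local φ fun P hP => ?_
  obtain ⟨g, hg, L, rfl, hL, -⟩ := hJ.exists_list P hP
  exact ⟨g, hg, R.isCob_of_lt hL hi _ (by rw [LinearMap.comp_assoc, hφ, LinearMap.comp_zero])⟩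

/-- Above the critical degree the dual of the resolution is exact, as the resolution splits. -/
lemma isCob_of_codim_lt {i : ℕ} (hi : c < i) (φ : R.F i →ₗ[S] S) (hφ : φ ∘ₗ R.d i = 0) :
    R.IsCob φ := by
  obtain ⟨n, rfl⟩ : ∃ n, i = n + 1 := ⟨i - 1, by omega⟩
  obtain ⟨r, hr⟩ := R.split n (by omega)
  refine ⟨φ ∘ₗ r, LinearMap.ext fun v => ?_⟩
  obtain ⟨w, hw⟩ := (R.exact n (v - r (R.d n v))).1 (by
    rw [map_sub, sub_eq_zero]
    exact (LinearMap.congr_fun hr v).symm)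
  rw [← sub_eq_zero]
  change φ v - φ (r (R.d n v)) = 0
  rw [← map_sub, ← hw]
  exact LinearMap.congr_fun hφ w

section
variable {g : S} {L : List J} {m : ℕ}

lemma algebraMap_mem_listSMul (hm : ∀ x ∈ J, g ^ m * x ∈ Ideal.ofList (L.map Subtype.val))
    {x : S} (hx : x ∈ J) : algebraMap S (Localization.Away g) x ∈
      listSMul (Localization.Away g) L := by
  obtain ⟨w, hw⟩ := (IsLocalization.Away.algebraMap_isUnit (S := Localization.Away g) g).pow m
  have h : _ ∈ listSMul (Localization.Away g) L := Submodule.smul_mem_smul (hm x hx)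
    (Submodule.mem_top (R := S) (x := ((w⁻¹ : (Localization.Away g)ˣ) : Localization.Away g)))
  convert h using 1
  rw [Algebra.smul_def, map_mul, map_pow, ← hw, mul_right_comm, Units.mul_inv, one_mul]

lemma exists_pow_mul_mem_of_algebraMap_mem {x : S}
    (hx : algebraMap S (Localization.Away g) x ∈ listSMul (Localization.Away g) L) :
    ∃ k : ℕ, g ^ k * x ∈ J := by
  have h : listSMul (Localization.Away g) L ≤
      (J.map (algebraMap S (Localization.Away g))).restrictScalars S := by
    refine Submodule.smul_le.2 fun a ha z _ => ?_
    rw [Algebra.smul_def]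
    refine Ideal.mul_mem_right _ _ (Ideal.mem_map_of_mem _ ?_)
    have : Ideal.ofList (L.map Subtype.val) ≤ J := by
      refine Ideal.span_le.2 fun y hy => ?_
      obtain ⟨z, -, rfl⟩ := List.mem_map.1 hy
      exact z.2
    exact this ha
  obtain ⟨k, hk⟩ := exists_pow_mul_mem (I := Ideal.span {x}) (K := J) g
    (Submodule.fg_span_singleton x) (by
      rw [Ideal.map_span, Set.image_singleton, Ideal.span_singleton_le_iff_mem]
      exact h hx)
  exact ⟨k, hk x (Ideal.mem_span_singleton_self x)⟩

/-- Local injectivity of the comparison map: a cocycle whose full contraction with the local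
regular sequence `L` is in `J` is locally a coboundary. -/
lemma isCob_localized
    (hL : RingTheory.Sequence.IsWeaklyRegular (Localization.Away g) (L.map Subtype.val))
    (hm : ∀ x ∈ J, g ^ m * x ∈ Ideal.ofList (L.map Subtype.val)) (φ : R.F L.length →ₗ[S] S)
    (hφ : φ ∘ₗ R.d L.length = 0) (h : R.conRev L φ R.e ∈ J) :
    R.IsCob (Algebra.linearMap S (Localization.Away g) ∘ₗ φ) := by
  refine R.isCob_of_conRev hL _ (by rw [LinearMap.comp_assoc, hφ, LinearMap.comp_zero])
    fun v => ?_
  obtain ⟨a, rfl⟩ := R.span_e v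
  rw [conRev_comp, LinearMap.comp_apply, map_smul]
  exact algebraMap_mem_listSMul hm (J.mul_mem_left a h)

/-- Local surjectivity of the comparison map: up to a power of `g`, every class modulo `J` is the
full contraction of a cocycle with the local regular sequence `L`. -/
lemma exists_cocycle
    (hL : RingTheory.Sequence.IsWeaklyRegular (Localization.Away g) (L.map Subtype.val))
    (hm : ∀ x ∈ J, g ^ m * x ∈ Ideal.ofList (L.map Subtype.val)) (r : S) :
    ∃ φ : R.F L.length →ₗ[S] S, φ ∘ₗ R.d L.length = 0 ∧
      ∃ k : ℕ, R.conRev L φ R.e - g ^ k * r ∈ J := by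
  obtain ⟨ψ, hψ⟩ := Module.projective_lifting_property J.mkQ R.ε J.mkQ_surjective
  have hψ' : ∀ v, Ideal.Quotient.mk J (ψ v) = R.ε v := LinearMap.congr_fun hψ
  have hd : ∀ v, ψ (R.d 0 v) ∈ J := fun v => by
    rw [← Ideal.Quotient.eq_zero_iff_mem, hψ']
    exact R.exact_zero.apply_apply_eq_zero v
  obtain ⟨φ, hφ, h⟩ := R.exists_conRev_sub_mem hL
    (Algebra.linearMap S (Localization.Away g) ∘ₗ (r • ψ))
    (fun v => algebraMap_mem_listSMul hm (J.mul_mem_left r (hd v)))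
  -- clear the denominators of the local cocycle `φ`, first in its values, then in `φ ∘ d = 0`
  obtain ⟨a, θ, hθ⟩ := exists_pow_smul_lift g φ
  obtain ⟨b, hb⟩ := exists_pow_smul_eq_zero g (θ ∘ₗ R.d L.length) (by
    rw [← LinearMap.comp_assoc, hθ, LinearMap.smul_comp, hφ, smul_zero])
  obtain ⟨k, hk⟩ := exists_pow_mul_mem_of_algebraMap_mem (J := J) (g := g) (L := L)
    (x := R.conRev L θ R.e - g ^ a * (r * ψ R.e)) (by
      have h1 : algebraMap S (Localization.Away g) (R.conRev L θ R.e) =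
          g ^ a • R.conRev L φ R.e := by
        rw [← LinearMap.smul_apply, ← conRev_smul, ← hθ, conRev_comp]
        rfl
      have h2 := (listSMul (Localization.Away g) L).smul_mem (g ^ a) (h R.e)
      rw [map_sub, h1, map_mul, ← Algebra.smul_def, ← smul_sub]
      exact h2)
  refine ⟨g ^ (k + b) • θ, ?_, k + b + a, ?_⟩
  · rw [LinearMap.smul_comp, pow_add, mul_smul, hb, smul_zero]
  · have h1 : ψ R.e - 1 ∈ J := by
      rw [← Ideal.Quotient.eq_zero_iff_mem, map_sub, hψ', R.ε_e, map_one, sub_self]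
    have h2 := J.add_mem (J.mul_mem_left (g ^ b) hk) (J.mul_mem_left (g ^ (k + b + a) * r) h1)
    rw [conRev_smul, LinearMap.smul_apply, smul_eq_mul]
    convert h2 using 1
    ring

end

end FreeRes

/-! ### The conormal module acting on cohomology -/

namespace FreeRes

variable {S : Type u} [CommRing S] {J : Ideal S} {c : ℕ} (R : FreeRes J c)

/-- Cochains of all degrees with values in `S ⧸ J`. -/
def T : Type u := ∀ n, R.F n →ₗ[S] S ⧸ J

instance : AddCommGroup R.T := inferInstanceAs (AddCommGroup (∀ n, R.F n →ₗ[S] S ⧸ J))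

instance : Module (S ⧸ J) R.T := inferInstanceAs (Module (S ⧸ J) (∀ n, R.F n →ₗ[S] S ⧸ J))

instance : Module S R.T := inferInstanceAs (Module S (∀ n, R.F n →ₗ[S] S ⧸ J))

instance : IsScalarTower S (S ⧸ J) R.T :=
  inferInstanceAs (IsScalarTower S (S ⧸ J) (∀ n, R.F n →ₗ[S] S ⧸ J))

/-- The differential of the cochains with values in `S ⧸ J`. -/
def delta : R.T →ₗ[S ⧸ J] R.T where
  toFun φ n := match n with
    | 0 => 0
    | n + 1 => φ n ∘ₗ R.d n
  map_add' φ ψ := by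
    funext n
    cases n with
    | zero => exact (add_zero _).symm
    | succ n => rfl
  map_smul' a φ := by
    funext n
    cases n with
    | zero => exact (smul_zero a).symm
    | succ n => rfl

@[simp] lemma delta_zero (φ : R.T) : R.delta φ 0 = 0 := rfl
@[simp] lemma delta_succ (φ : R.T) (n : ℕ) : R.delta φ (n + 1) = φ n ∘ₗ R.d n := rfl

/-- Contraction of cochains with a family of maps of degree one. -/
def conU (t : ∀ n, R.F n →ₗ[S] R.F (n + 1)) : R.T →ₗ[S ⧸ J] R.T where
  toFun φ n := φ (n + 1) ∘ₗ t n
  map_add' _ _ := rfl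
  map_smul' _ _ := rfl

@[simp] lemma conU_apply (t : ∀ n, R.F n →ₗ[S] R.F (n + 1)) (φ : R.T) (n : ℕ) :
    R.conU t φ n = φ (n + 1) ∘ₗ t n := rfl

lemma smul_quotient_eq_zero {x : S} (hx : x ∈ J) (b : S ⧸ J) : x • b = 0 := by
  rw [Algebra.smul_def, Ideal.Quotient.algebraMap_eq, Ideal.Quotient.eq_zero_iff_mem.2 hx,
    zero_mul]

/-- Contraction by `x ∈ J` anticommutes with the differential, since `x` kills `S ⧸ J`. -/
lemma delta_conU (x : J) (φ : R.T) :
    R.delta (R.conU (R.s x) φ) = - R.conU (R.s x) (R.delta φ) := by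
  funext n
  refine LinearMap.ext fun v => ?_
  cases n with
  | zero =>
    change 0 = - φ 0 (R.d 0 (R.s x 0 v))
    rw [d_s_zero, map_smul, smul_quotient_eq_zero x.2, neg_zero]
  | succ n =>
    change φ (n + 1) (R.s x n (R.d n v)) = - φ (n + 1) (R.d (n + 1) (R.s x (n + 1) v))
    rw [d_s, map_sub, map_smul, smul_quotient_eq_zero x.2, zero_sub, neg_neg]

/-- The cocycles with values in `S ⧸ J`. -/
abbrev Z : Submodule (S ⧸ J) R.T := LinearMap.ker R.delta

/-- The cohomology of the cochains with values in `S ⧸ J`, that is the product of all the modules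
`Ext_Sⁿ (S ⧸ J, S ⧸ J)`. -/
abbrev H : Type u := ↥R.Z ⧸ (LinearMap.range R.delta).comap R.Z.subtype

lemma cocycle_apply (φ : R.Z) (n : ℕ) (v : R.F (n + 1)) : φ.1 n (R.d n v) = 0 := by
  have h : R.delta φ.1 = 0 := LinearMap.mem_ker.1 φ.2
  exact LinearMap.congr_fun (congrFun h (n + 1)) v

/-- The contraction on cocycles. -/
noncomputable def conZ (x : J) : R.Z →ₗ[S ⧸ J] R.Z :=
  (R.conU (R.s x)).restrict fun φ hφ => by
    rw [LinearMap.mem_ker, delta_conU, LinearMap.mem_ker.1 hφ, map_zero, neg_zero]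

/-- The contraction on cohomology. -/
noncomputable def conH (x : J) : Module.End (S ⧸ J) R.H :=
  Submodule.mapQ _ _ (R.conZ x) (by
    rintro ⟨_, _⟩ ⟨φ, rfl⟩
    exact ⟨- R.conU (R.s x) φ, by rw [map_neg, delta_conU, neg_neg]; rfl⟩)

/-- The class of a cocycle. -/
def cl (φ : R.Z) : R.H := Submodule.Quotient.mk φ

lemma cl_eq_cl {φ ψ : R.Z} (χ : R.T) (h : R.delta χ = φ.1 - ψ.1) : R.cl φ = R.cl ψ :=
  (Submodule.Quotient.eq _).2 ⟨χ, h⟩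

lemma conH_cl (x : J) (φ : R.Z) : R.conH x (R.cl φ) = R.cl (R.conZ x φ) := rfl

/-- Contraction with a family of maps anticommuting with the differential is zero in cohomology. -/
lemma exists_delta_eq_conU (t : ∀ n, R.F n →ₗ[S] R.F (n + 1)) (h0 : ∀ v, R.d 0 (t 0 v) = 0)
    (h1 : ∀ n v, R.d (n + 1) (t (n + 1) v) = - t n (R.d n v)) (φ : R.Z) :
    ∃ χ : R.T, R.delta χ = R.conU t φ.1 := by
  obtain ⟨h, e0, e1⟩ := R.exists_null_one t h0 h1
  have hφ := R.cocycle_apply φ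
  refine ⟨fun n => - φ.1 (n + 2) ∘ₗ h n, ?_⟩
  funext n
  refine LinearMap.ext fun v => ?_
  cases n with
  | zero =>
    change 0 = φ.1 1 (t 0 v)
    rw [e0, hφ]
  | succ n =>
    change - φ.1 (n + 2) (h n (R.d n v)) = φ.1 (n + 2) (t (n + 1) v)
    rw [e1, map_sub, hφ, zero_sub]

/-- The family `s x ∘ s x` commutes with the differential, so contracting with it is zero in
cohomology. -/
lemma exists_delta_eq_conU_conU (x : J) (φ : R.Z) :
    ∃ χ : R.T, R.delta χ = R.conU (R.s x) (R.conU (R.s x) φ.1) := by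
  obtain ⟨h, e0, e1⟩ := R.exists_null_two (fun n => R.s x (n + 1) ∘ₗ R.s x n)
    (fun v => by
      change R.d 1 (R.s x 1 (R.s x 0 v)) = 0
      rw [d_s, d_s_zero, map_smul, sub_self])
    (fun n v => by
      change R.d (n + 2) (R.s x (n + 2) (R.s x (n + 1) v)) = R.s x (n + 1) (R.s x n (R.d n v))
      rw [d_s, d_s, map_sub, map_smul, sub_sub_cancel])
  have hφ := R.cocycle_apply φ
  refine ⟨fun n => φ.1 (n + 3) ∘ₗ h n, ?_⟩
  funext n
  refine LinearMap.ext fun v => ?_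
  cases n with
  | zero =>
    change 0 = φ.1 2 (R.s x 1 (R.s x 0 v))
    rw [show R.s x 1 (R.s x 0 v) = _ from e0 v, hφ]
  | succ n =>
    change φ.1 (n + 3) (h n (R.d n v)) = φ.1 (n + 3) (R.s x (n + 2) (R.s x (n + 1) v))
    rw [show R.s x (n + 2) (R.s x (n + 1) v) = _ from e1 n v, map_add, hφ, zero_add]

lemma conH_mul_self (x : J) : R.conH x * R.conH x = 0 := by
  refine LinearMap.ext fun φ => ?_
  obtain ⟨φ, rfl⟩ := Submodule.Quotient.mk_surjective _ φ
  obtain ⟨χ, hχ⟩ := R.exists_delta_eq_conU_conU x φ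
  exact R.cl_eq_cl (φ := R.conZ x (R.conZ x φ)) (ψ := 0) χ (hχ.trans (sub_zero _).symm)

/-- The homotopies were chosen independently for `x`, `y` and `x + y`, but the difference `s (x +
y) - (s x + s y)` anticommutes with `d`, so it acts as zero in cohomology. -/
lemma conH_add (x y : J) : R.conH (x + y) = R.conH x + R.conH y := by
  refine LinearMap.ext fun φ => ?_
  obtain ⟨φ, rfl⟩ := Submodule.Quotient.mk_surjective _ φ
  obtain ⟨χ, hχ⟩ := R.exists_delta_eq_conU (fun n => R.s (x + y) n - (R.s x n + R.s y n))
    (fun v => by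
      change R.d 0 (R.s (x + y) 0 v - (R.s x 0 v + R.s y 0 v)) = 0
      simp only [map_sub, map_add, d_s_zero, Submodule.coe_add, add_smul, sub_self])
    (fun n v => by
      change R.d (n + 1) (R.s (x + y) (n + 1) v - (R.s x (n + 1) v + R.s y (n + 1) v)) =
        - (R.s (x + y) n (R.d n v) - (R.s x n (R.d n v) + R.s y n (R.d n v)))
      simp only [map_sub, map_add, d_s, Submodule.coe_add, add_smul]
      abel) φ
  refine R.cl_eq_cl (φ := R.conZ (x + y) φ) (ψ := R.conZ x φ + R.conZ y φ) χ (hχ.trans ?_)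
  funext n
  refine LinearMap.ext fun v => ?_
  change φ.1 (n + 1) (R.s (x + y) n v - (R.s x n v + R.s y n v)) =
    φ.1 (n + 1) (R.s (x + y) n v) - (φ.1 (n + 1) (R.s x n v) + φ.1 (n + 1) (R.s y n v))
  rw [map_sub, map_add]

/-- As for sums, the chosen homotopies for `a • x` and `x` agree in cohomology up to the factor
`a`. -/
lemma conH_smul (a : S) (x : J) :
    R.conH (a • x) = (Ideal.Quotient.mk J a : S ⧸ J) • R.conH x := by
  refine LinearMap.ext fun φ => ?_
  obtain ⟨φ, rfl⟩ := Submodule.Quotient.mk_surjective _ φ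
  obtain ⟨χ, hχ⟩ := R.exists_delta_eq_conU (fun n => R.s (a • x) n - a • R.s x n)
    (fun v => by
      change R.d 0 (R.s (a • x) 0 v - a • R.s x 0 v) = 0
      simp only [map_sub, map_smul, d_s_zero, Submodule.coe_smul, smul_smul, smul_eq_mul,
        sub_self])
    (fun n v => by
      change R.d (n + 1) (R.s (a • x) (n + 1) v - a • R.s x (n + 1) v) =
        - (R.s (a • x) n (R.d n v) - a • R.s x n (R.d n v))
      simp only [map_sub, map_smul, d_s, Submodule.coe_smul, smul_sub, smul_smul, smul_eq_mul]
      abel) φ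
  refine R.cl_eq_cl (φ := R.conZ (a • x) φ)
    (ψ := (Ideal.Quotient.mk J a : S ⧸ J) • R.conZ x φ) χ (hχ.trans ?_)
  funext n
  refine LinearMap.ext fun v => ?_
  change φ.1 (n + 1) (R.s (a • x) n v - a • R.s x n v) =
    φ.1 (n + 1) (R.s (a • x) n v) - Ideal.Quotient.mk J a * (φ.1 (n + 1) (R.s x n v))
  rw [map_sub, map_smul, Algebra.smul_def, Ideal.Quotient.algebraMap_eq]

lemma conH_mul (x y : J) : R.conH (x * y) = 0 := by
  change R.conH ((x : S) • y) = 0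
  rw [conH_smul, Ideal.Quotient.eq_zero_iff_mem.2 x.2, zero_smul]

/-- The action of the conormal module on cohomology by contractions. -/
noncomputable def conCot : J.Cotangent →ₗ[S ⧸ J] Module.End (S ⧸ J) R.H :=
  LinearMap.extendScalarsOfSurjective (R := S) Ideal.Quotient.mk_surjective
    (Ideal.Cotangent.lift
      { toFun := R.conH
        map_add' := R.conH_add
        map_smul' := fun a x => R.conH_smul a x } R.conH_mul)

lemma conCot_toCotangent (x : J) : R.conCot (J.toCotangent x) = R.conH x :=
  Ideal.Cotangent.lift_toCotangent _ R.conH_mul x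

/-- The action of the exterior algebra of the conormal module on cohomology. -/
noncomputable def conExt : ExteriorAlgebra (S ⧸ J) J.Cotangent →ₐ[S ⧸ J] Module.End (S ⧸ J) R.H :=
  ExteriorAlgebra.lift (S ⧸ J) ⟨R.conCot, fun m => by
    obtain ⟨x, rfl⟩ := J.toCotangent_surjective m
    rw [conCot_toCotangent, conH_mul_self]⟩

lemma conExt_ι (x : J) :
    R.conExt (ExteriorAlgebra.ι (S ⧸ J) (J.toCotangent x)) = R.conH x :=
  (ExteriorAlgebra.lift_ι_apply ..).trans (R.conCot_toCotangent x)

end FreeRes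

/-! ### The comparison map -/

/-- An alternating map of degree `n` vanishing on a family of `n` vectors vanishes on all families
in their span. -/
lemma AlternatingMap.eq_zero_of_mem_span {B M N : Type*} [CommRing B] [AddCommGroup M]
    [Module B M] [AddCommGroup N] [Module B N] {n : ℕ} (A : M [⋀^Fin n]→ₗ[B] N) (v : Fin n → M)
    (hA : A v = 0) (u : Fin n → M) (hu : ∀ i, u i ∈ Submodule.span B (Set.range v)) :
    A u = 0 := by
  choose a ha using fun i => (Submodule.mem_span_range_iff_exists_fun B).1 (hu i)
  obtain rfl : (fun i => ∑ j, a i j • v j) = u := funext ha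
  change A.toMultilinearMap (fun i => ∑ j, a i j • v j) = 0
  rw [MultilinearMap.map_sum]
  refine Finset.sum_eq_zero fun σ _ => ?_
  rw [MultilinearMap.map_smul_univ]
  change _ • A (v ∘ σ) = 0
  by_cases hσ : Function.Injective σ
  · have h := A.map_perm v (Equiv.ofBijective σ (Finite.injective_iff_bijective.1 hσ))
    rw [hA, smul_zero] at h
    rw [show A (v ∘ σ) = 0 from h, smul_zero]
  · rw [A.map_eq_zero_of_not_injective (v ∘ σ) fun h => hσ h.of_comp, smul_zero]

/-- If `p • M` lies in the span of `n` vectors, then `pⁿ` annihilates every linear map out of `⋀ⁿ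
M` which vanishes on the wedge of these vectors. -/
lemma exteriorPower.pow_smul_eq_zero {B M N : Type*} [CommRing B] [AddCommGroup M]
    [Module B M] [AddCommGroup N] [Module B N] {n : ℕ} (D : ⋀[B]^n M →ₗ[B] N) (v : Fin n → M)
    (hD : D (exteriorPower.ιMulti B n v) = 0) (p : B)
    (hp : ∀ x : M, p • x ∈ Submodule.span B (Set.range v)) : p ^ n • D = 0 := by
  refine exteriorPower.linearMap_ext (AlternatingMap.ext fun u => ?_)
  have h := (D.compAlternatingMap (exteriorPower.ιMulti B n)).eq_zero_of_mem_span v hD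
    (fun i => p • u i) fun i => hp (u i)
  have h2 := (D.compAlternatingMap (exteriorPower.ιMulti B n)).toMultilinearMap.map_smul_univ
    (fun _ => p) u
  rw [Finset.prod_const, Finset.card_univ, Fintype.card_fin] at h2
  exact h2.symm.trans h

namespace FreeRes

variable {S : Type u} [CommRing S] {J : Ideal S} {c : ℕ} (R : FreeRes J c)

/-- The cochain concentrated in degree `n` given by `θ`. -/
def sgl (n : ℕ) (θ : R.F n →ₗ[S] S ⧸ J) : R.T :=
  (Pi.single n θ : ∀ n, R.F n →ₗ[S] S ⧸ J)

lemma sgl_same (n : ℕ) (θ : R.F n →ₗ[S] S ⧸ J) : R.sgl n θ n = θ := Pi.single_eq_same _ _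

lemma sgl_ne {n m : ℕ} (h : m ≠ n) (θ : R.F n →ₗ[S] S ⧸ J) : R.sgl n θ m = 0 :=
  Pi.single_eq_of_ne h _

lemma sgl_add (n : ℕ) (θ η : R.F n →ₗ[S] S ⧸ J) : R.sgl n (θ + η) = R.sgl n θ + R.sgl n η :=
  Pi.single_add _ _ _

lemma sgl_smul (n : ℕ) (a : S) (θ : R.F n →ₗ[S] S ⧸ J) : R.sgl n (a • θ) = a • R.sgl n θ :=
  Pi.single_smul _ _ _

lemma sgl_zero (n : ℕ) : R.sgl n 0 = 0 := Pi.single_zero _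

lemma delta_sgl (n : ℕ) (θ : R.F n →ₗ[S] S ⧸ J) :
    R.delta (R.sgl n θ) = R.sgl (n + 1) (θ ∘ₗ R.d n) := by
  funext m
  cases m with
  | zero => rw [delta_zero, sgl_ne _ (Nat.succ_ne_zero n).symm]
  | succ m =>
    rw [delta_succ]
    rcases eq_or_ne m n with rfl | h
    · rw [sgl_same, sgl_same]
    · rw [sgl_ne _ h, sgl_ne _ fun h' => h (Nat.succ_injective h'), LinearMap.zero_comp]

lemma conU_sgl (t : ∀ n, R.F n →ₗ[S] R.F (n + 1)) (n : ℕ) (θ : R.F (n + 1) →ₗ[S] S ⧸ J) :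
    R.conU t (R.sgl (n + 1) θ) = R.sgl n (θ ∘ₗ t n) := by
  funext m
  rw [conU_apply]
  rcases eq_or_ne m n with rfl | h
  · rw [sgl_same, sgl_same]
  · rw [sgl_ne _ h, sgl_ne _ fun h' => h (Nat.succ_injective h'), LinearMap.zero_comp]

/-- Evaluation at `e`, the projection to `Ext⁰ (S ⧸ J, S ⧸ J) = S ⧸ J`. -/
noncomputable def ev0 : R.H →ₗ[S ⧸ J] S ⧸ J :=
  Submodule.liftQ _
    { toFun := fun φ : R.Z => φ.1 0 R.e
      map_add' := fun _ _ => rfl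
      map_smul' := fun _ _ => rfl } (by
    rintro ⟨_, _⟩ ⟨φ, rfl⟩
    rfl)

lemma ev0_cl (φ : R.Z) : R.ev0 (R.cl φ) = φ.1 0 R.e := rfl

/-- The `n`-cocycles with values in `S`. -/
def cocyc (n : ℕ) : Submodule S (R.F n →ₗ[S] S) := LinearMap.ker (LinearMap.lcomp S S (R.d n))

lemma mem_cocyc {n : ℕ} {φ : R.F n →ₗ[S] S} : φ ∈ R.cocyc n ↔ φ ∘ₗ R.d n = 0 := Iff.rfl

/-- The map from `n`-cocycles with values in `S` to cohomology with values in `S ⧸ J`. -/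
noncomputable def clL (n : ℕ) : R.cocyc n →ₗ[S] R.H where
  toFun φ := R.cl ⟨R.sgl n (J.mkQ ∘ₗ φ.1), by
    rw [LinearMap.mem_ker, delta_sgl, LinearMap.comp_assoc, R.mem_cocyc.1 φ.2,
      LinearMap.comp_zero, sgl_zero]⟩
  map_add' φ ψ := congrArg R.cl (Subtype.ext (by
    change R.sgl n (J.mkQ ∘ₗ (φ.1 + ψ.1)) = R.sgl n (J.mkQ ∘ₗ φ.1) + R.sgl n (J.mkQ ∘ₗ ψ.1)
    rw [LinearMap.comp_add, sgl_add]))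
  map_smul' a φ := congrArg R.cl (Subtype.ext (by
    change R.sgl n (J.mkQ ∘ₗ (a • φ.1)) = a • R.sgl n (J.mkQ ∘ₗ φ.1)
    rw [LinearMap.comp_smul, sgl_smul]))

/-- Coboundaries with values in `S` have trivial class with values in `S ⧸ J`. -/
lemma clL_eq_zero {n : ℕ} (φ : R.cocyc n) (h : R.IsCob φ.1) : R.clL n φ = 0 := by
  cases n with
  | zero =>
    obtain rfl : φ = 0 := Subtype.ext h
    exact map_zero _
  | succ n =>
    obtain ⟨χ, hχ⟩ := h
    refine R.cl_eq_cl (ψ := 0) (R.sgl n (J.mkQ ∘ₗ χ)) ?_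
    rw [delta_sgl, LinearMap.comp_assoc, ← hχ]
    exact (sub_zero _).symm

/-- Acting in cohomology by the elements of `L`, the first one first, and evaluating at `e` is the
contraction `conRev`. -/
lemma ev0_prod (L : List J) (z : R.Z) (θ : R.F L.length →ₗ[S] S ⧸ J)
    (hz : z.1 = R.sgl L.length θ) :
    R.ev0 ((L.map R.conH).reverse.prod (R.cl z)) = R.conRev L θ R.e := by
  induction L generalizing z with
  | nil =>
    change R.ev0 (R.cl z) = θ R.e
    rw [ev0_cl, hz]
    exact LinearMap.congr_fun (R.sgl_same 0 θ) R.e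
  | cons x L ih =>
    rw [List.map_cons, List.reverse_cons, List.prod_append, List.prod_singleton,
      Module.End.mul_apply, conH_cl]
    refine ih (R.conZ x z) (θ ∘ₗ R.s x L.length) ?_
    change R.conU (R.s x) z.1 = _
    rw [hz]
    exact R.conU_sgl _ _ _

/-- The comparison map. An `n`-cocycle `φ` with values in `S` is sent to the linear form on
`⋀ⁿ (J / J²)` which takes `w` to the degree zero part of `w` acting on the class of `φ` modulo `J`.
-/
noncomputable def theta (n : ℕ) :
    R.cocyc n →ₗ[S] Module.Dual (S ⧸ J) (⋀[S ⧸ J]^n J.Cotangent) where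
  toFun φ := R.ev0 ∘ₗ LinearMap.applyₗ (R.clL n φ) ∘ₗ R.conExt.toLinearMap ∘ₗ
    (⋀[S ⧸ J]^n J.Cotangent).subtype
  map_add' φ ψ := by
    rw [map_add, map_add, LinearMap.add_comp, LinearMap.comp_add]
  map_smul' a φ := by
    refine LinearMap.ext fun w => ?_
    change R.ev0 (R.conExt w.1 (R.clL n (a • φ))) = a • R.ev0 (R.conExt w.1 (R.clL n φ))
    rw [map_smul, LinearMap.map_smul_of_tower, LinearMap.map_smul_of_tower]

lemma theta_apply (n : ℕ) (φ : R.cocyc n) (w : ⋀[S ⧸ J]^n J.Cotangent) :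
    R.theta n φ w = R.ev0 (R.conExt w.1 (R.clL n φ)) := rfl

/-- On the wedge of a sequence the comparison map is given by the full contraction. The sequence
is reversed because a product of endomorphisms applies its last factor first. -/
lemma theta_ιMulti (L : List J) (φ : R.cocyc L.length) :
    R.theta L.length φ (exteriorPower.ιMulti (S ⧸ J) L.length
      fun i => J.toCotangent (L.get i.rev)) =
      Ideal.Quotient.mk J (R.conRev L φ.1 R.e) := by
  have h : R.conExt (ExteriorAlgebra.ιMulti (S ⧸ J) L.length
      fun i => J.toCotangent (L.get i.rev)) = (L.map R.conH).reverse.prod := by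
    rw [ExteriorAlgebra.ιMulti_apply, map_list_prod, List.map_ofFn]
    congr 1
    refine List.ext_get (by simp) fun i h₁ h₂ => ?_
    rw [List.get_ofFn]
    simp only [Function.comp_apply, List.get_eq_getElem, List.getElem_reverse,
      List.getElem_map, List.length_map]
    rw [conExt_ι]
    congr 2
    simp only [Fin.val_rev, Fin.val_cast]
    omega
  rw [theta_apply, exteriorPower.ιMulti_apply_coe, h]
  refine (R.ev0_prod L _ (J.mkQ ∘ₗ φ.1) rfl).trans ?_
  rw [conRev_comp]
  rfl

/-- The local regular sequence generates the conormal module up to a power of `g`. -/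
lemma smul_mem_span_toCotangent {g : S} {L : List J} {m : ℕ}
    (hm : ∀ x ∈ J, g ^ m * x ∈ Ideal.ofList (L.map Subtype.val)) (x : J.Cotangent) :
    (Ideal.Quotient.mk J (g ^ m) : S ⧸ J) • x ∈ Submodule.span (S ⧸ J)
      (Set.range fun i : Fin L.length => J.toCotangent (L.get i.rev)) := by
  obtain ⟨x, rfl⟩ := J.toCotangent_surjective x
  have key : ∀ y : S, y ∈ Ideal.ofList (L.map Subtype.val) → ∃ hy : y ∈ J,
      J.toCotangent ⟨y, hy⟩ ∈ Submodule.span (S ⧸ J)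
        (Set.range fun i : Fin L.length => J.toCotangent (L.get i.rev)) := by
    intro y hy
    refine Submodule.span_induction ?_ ?_ ?_ ?_ hy
    · intro y hy
      obtain ⟨z, hz, rfl⟩ := List.mem_map.1 hy
      refine ⟨z.2, Submodule.subset_span ?_⟩
      obtain ⟨i, hi⟩ := List.get_of_mem hz
      refine ⟨i.rev, ?_⟩
      change J.toCotangent (L.get i.rev.rev) = _
      rw [Fin.rev_rev, hi]
    · exact ⟨J.zero_mem, by
        rw [show (⟨0, J.zero_mem⟩ : J) = 0 from rfl, map_zero]
        exact Submodule.zero_mem _⟩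
    · rintro y z - - ⟨hy, hy'⟩ ⟨hz, hz'⟩
      exact ⟨J.add_mem hy hz, by
        rw [show (⟨y + z, J.add_mem hy hz⟩ : J) = ⟨y, hy⟩ + ⟨z, hz⟩ from rfl, map_add]
        exact Submodule.add_mem _ hy' hz'⟩
    · rintro a y - ⟨hy, hy'⟩
      exact ⟨J.mul_mem_left a hy, by
        rw [show (⟨a • y, J.mul_mem_left a hy⟩ : J) = a • ⟨y, hy⟩ from rfl, map_smul]
        exact Submodule.smul_of_tower_mem _ a hy'⟩
  obtain ⟨h, h'⟩ := key _ (hm x x.2)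
  have : (Ideal.Quotient.mk J (g ^ m) : S ⧸ J) • J.toCotangent x =
      J.toCotangent ⟨g ^ m * x, h⟩ := by
    rw [show (⟨g ^ m * x, h⟩ : J) = g ^ m • x from rfl, map_smul]
    exact algebraMap_smul (S ⧸ J) (g ^ m) (J.toCotangent x)
  rw [this]
  exact h'

lemma isCob_of_theta_eq_zero (hJ : IsLocallyRegularOfCodim J c) (φ : R.cocyc c)
    (h : R.theta c φ = 0) : R.IsCob φ.1 := by
  refine R.isCob_of_local φ.1 fun P hP => ?_
  obtain ⟨g, hg, L, rfl, hL, m, hm⟩ := hJ.exists_list P hP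
  refine ⟨g, hg, R.isCob_localized hL hm φ.1 φ.2 ?_⟩
  rw [← Ideal.Quotient.eq_zero_iff_mem, ← theta_ιMulti, h, LinearMap.zero_apply]

/-- The multipliers `a` for which `a • l` is in the image form an ideal, which is contained in no
prime. -/
lemma theta_surjective (hJ : IsLocallyRegularOfCodim J c) :
    Function.Surjective (R.theta c) := by
  intro l
  have hI : (LinearMap.range (R.theta c)).comap (LinearMap.toSpanSingleton S _ l) = ⊤ := by
    refine Ideal.eq_top_of_forall_prime _ fun P hP => ?_
    obtain ⟨g, hg, L, rfl, hL, m, hm⟩ := hJ.exists_list P hP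
    set w := exteriorPower.ιMulti (S ⧸ J) L.length
      fun i => J.toCotangent (L.get i.rev) with hw
    obtain ⟨r, hr⟩ := Ideal.Quotient.mk_surjective (l w)
    obtain ⟨φ, hφ, k, hk⟩ := R.exists_cocycle hL hm r
    -- locally a form on the top exterior power is determined by its value on `w`
    have hD := exteriorPower.pow_smul_eq_zero
      (R.theta L.length ⟨φ, hφ⟩ - (Ideal.Quotient.mk J (g ^ k) : S ⧸ J) • l) _ (by
        rw [LinearMap.sub_apply, theta_ιMulti, LinearMap.smul_apply, ← hw, ← hr, smul_eq_mul,
          ← map_mul, ← map_sub, Ideal.Quotient.eq_zero_iff_mem]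
        exact hk) _ (smul_mem_span_toCotangent hm)
    refine ⟨(g ^ m) ^ L.length * g ^ k, ⟨(g ^ m) ^ L.length • ⟨φ, hφ⟩, ?_⟩, fun h => ?_⟩
    · rw [smul_sub, sub_eq_zero, smul_smul, ← map_pow, ← map_mul] at hD
      rw [map_smul, LinearMap.toSpanSingleton_apply]
      exact hD
    · rw [← pow_mul, ← pow_add] at h
      exact hg (hP.mem_of_pow_mem _ h)
  have h1 : (1 : S) ∈ (LinearMap.range (R.theta c)).comap (LinearMap.toSpanSingleton S _ l) :=
    hI ▸ Submodule.mem_top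
  rw [Submodule.mem_comap, LinearMap.toSpanSingleton_apply, one_smul] at h1
  exact h1

end FreeRes

/-! ### Comparison with `Ext` -/

namespace FreeRes

variable {S : Type u} [CommRing S] {J : Ideal S} {c : ℕ} (R : FreeRes J c)

/-- The resolution as a chain complex of modules. -/
noncomputable def cx : ChainComplex (ModuleCat.{u} S) ℕ :=
  ChainComplex.of (fun n => ModuleCat.of S (R.F n)) (fun n => ModuleCat.ofHom (R.d n))
    fun n => by
      rw [← ModuleCat.ofHom_comp, d_comp_d]
      rfl

lemma cx_d (n : ℕ) : R.cx.d (n + 1) n = ModuleCat.ofHom (R.d n) :=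
  ChainComplex.of_d (fun n => ModuleCat.of S (R.F n)) (fun n => ModuleCat.ofHom (R.d n)) n

/-- The augmentation as a morphism of modules. -/
noncomputable def cxε : R.cx.X 0 ⟶ ModuleCat.of S (S ⧸ J) := ModuleCat.ofHom R.ε

lemma cx_d_comp_cxε : R.cx.d 1 0 ≫ R.cxε = 0 := by
  rw [cx_d]
  exact ModuleCat.hom_ext (R.exact_zero.linearMap_comp_eq_zero)

/-- The resolution as a projective resolution in the sense of Mathlib. -/
noncomputable def projRes : ProjectiveResolution (ModuleCat.of S (S ⧸ J)) where
  complex := R.cx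
  projective n := by
    change Projective (ModuleCat.of S (R.F n))
    exact ModuleCat.projective_of_categoryTheory_projective _
  π := (ChainComplex.toSingle₀Equiv _ _).symm ⟨R.cxε, R.cx_d_comp_cxε⟩
  quasiIso := ⟨fun n => by
    cases n with
    | zero =>
      rw [ChainComplex.quasiIsoAt₀_iff, ShortComplex.quasiIso_iff_of_zeros']
      · constructor
        · rw [ShortComplex.moduleCat_exact_iff]
          intro (x : R.F 0) hx
          have hx : ((ChainComplex.toSingle₀Equiv R.cx (ModuleCat.of S (S ⧸ J))).symm
            ⟨R.cxε, R.cx_d_comp_cxε⟩).f 0 x = 0 := hx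
          rw [ChainComplex.toSingle₀Equiv_symm_apply_f_zero] at hx
          obtain ⟨y, hy⟩ := (R.exact_zero x).1 hx
          refine ⟨y, ?_⟩
          change R.cx.d 1 0 y = x
          rw [cx_d]
          exact hy
        · rw [ModuleCat.epi_iff_surjective]
          change Function.Surjective (((ChainComplex.toSingle₀Equiv R.cx
            (ModuleCat.of S (S ⧸ J))).symm ⟨R.cxε, R.cx_d_comp_cxε⟩).f 0)
          rw [ChainComplex.toSingle₀Equiv_symm_apply_f_zero]
          intro b
          obtain ⟨a, rfl⟩ := Ideal.Quotient.mk_surjective b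
          refine ⟨a • R.e, ?_⟩
          change R.ε (a • R.e) = _
          rw [map_smul, ε_e, Algebra.smul_def, mul_one, Ideal.Quotient.algebraMap_eq]
      all_goals rfl
    | succ n =>
      rw [quasiIsoAt_iff_exactAt' _ _ (ChainComplex.exactAt_succ_single_obj _ _),
        HomologicalComplex.exactAt_iff' _ (n + 1 + 1) (n + 1) n (by simp) (by simp)]
      rw [ShortComplex.moduleCat_exact_iff]
      intro (x : R.F (n + 1)) hx
      have hx : R.cx.d (n + 1) n x = 0 := hx
      rw [cx_d] at hx
      obtain ⟨y, hy⟩ := (R.exact n x).1 hx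
      refine ⟨y, ?_⟩
      change R.cx.d (n + 1 + 1) (n + 1) y = x
      rw [cx_d]
      exact hy⟩

/-- A surjection from the cycles whose kernel is the boundaries computes the homology. -/
lemma _root_.ModuleCat.nonempty_homology_equiv (T : ShortComplex (ModuleCat.{u} S)) {D : Type v}
    [AddCommGroup D] [Module S D] (t : LinearMap.ker T.g.hom →ₗ[S] D)
    (ht : Function.Surjective t) (ht' : ∀ x, t x = 0 ↔ x.1 ∈ LinearMap.range T.f.hom) :
    Nonempty (T.homology ≃ₗ[S] D) := by
  refine ⟨T.moduleCatHomologyIso.toLinearEquiv ≪≫ₗ (Submodule.quotEquivOfEq _ _ ?_) ≪≫ₗ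
    t.quotKerEquivOfSurjective ht⟩
  ext x
  rw [LinearMap.mem_ker, ht']
  constructor
  · rintro ⟨y, rfl⟩
    exact ⟨y, rfl⟩
  · rintro ⟨y, hy⟩
    exact ⟨y, Subtype.ext hy⟩

/-- The cohomology of the dual of the resolution, in terms of cocycles and coboundaries. -/
lemma homology_equiv {D : Type v} [AddCommGroup D] [Module S D] (n : ℕ)
    (t : R.cocyc n →ₗ[S] D) (ht : Function.Surjective t)
    (ht' : ∀ φ, t φ = 0 ↔ R.IsCob φ.1) :
    Nonempty ((R.cx.linearYonedaObj S (ModuleCat.of S S)).homology n ≃ₗ[S] D) := by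
  set K := R.cx.linearYonedaObj S (ModuleCat.of S S) with hK
  have hd (i : ℕ) (x : ModuleCat.of S (R.F i) ⟶ ModuleCat.of S S) :
      (K.d i (i + 1)).hom x = ModuleCat.ofHom (x.hom ∘ₗ R.d i) := by
    change R.cx.d (i + 1) i ≫ x = _
    rw [cx_d]
    rfl
  let q : LinearMap.ker (K.d n (n + 1)).hom ≃ₗ[S] R.cocyc n :=
    { toFun := fun x => ⟨(show ModuleCat.of S (R.F n) ⟶ ModuleCat.of S S from x.1).hom, by
        have h := (hd n x.1).symm.trans x.2
        exact congrArg ModuleCat.Hom.hom h⟩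
      invFun := fun φ => ⟨ModuleCat.ofHom φ.1, by
        refine (hd n _).trans ?_
        exact congrArg ModuleCat.ofHom φ.2⟩
      map_add' := fun _ _ => rfl
      map_smul' := fun _ _ => rfl
      left_inv := fun _ => rfl
      right_inv := fun _ => rfl }
  cases n with
  | zero =>
    obtain ⟨e⟩ := ModuleCat.nonempty_homology_equiv (K.sc' 0 0 1) (t ∘ₗ q.toLinearMap)
      (ht.comp q.surjective) (fun x => by
        refine (ht' (q x)).trans ?_
        change (q x).1 = 0 ↔ x.1 ∈ LinearMap.range (K.d 0 0).hom
        have h0 : K.d 0 0 = 0 := K.shape 0 0 (by simp)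
        constructor
        · exact fun h => ⟨0, (map_zero _).trans (congrArg ModuleCat.ofHom h).symm⟩
        · rintro ⟨y, hy⟩
          have hy : (K.d 0 0).hom y = x.1 := hy
          rw [h0] at hy
          exact (congrArg ModuleCat.Hom.hom hy).symm)
    exact ⟨(K.homologyIsoSc' 0 0 1 (by simp) (by simp)).toLinearEquiv ≪≫ₗ e⟩
  | succ n =>
    obtain ⟨e⟩ := ModuleCat.nonempty_homology_equiv (K.sc' n (n + 1) (n + 2)) (t ∘ₗ q.toLinearMap)
      (ht.comp q.surjective) (fun x => by
        refine (ht' (q x)).trans ?_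
        constructor
        · rintro ⟨χ, hχ⟩
          refine ⟨ModuleCat.ofHom χ, (hd n _).trans ?_⟩
          exact (congrArg ModuleCat.ofHom hχ).symm
        · rintro ⟨χ, hχ⟩
          refine ⟨(show ModuleCat.of S (R.F n) ⟶ ModuleCat.of S S from χ).hom, ?_⟩
          exact (congrArg ModuleCat.Hom.hom ((hd n χ).symm.trans hχ)).symm)
    exact ⟨(K.homologyIsoSc' n (n + 1) (n + 2) (by simp) (by simp)).toLinearEquiv ≪≫ₗ e⟩

/-- Mathlib computes `Ext` from any projective resolution, in particular from `R`; so a surjection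
from the `n`-cocycles whose kernel is the coboundaries computes `Extⁿ (S ⧸ J, S)`. -/
lemma ext_equiv {D : Type v} [AddCommGroup D] [Module S D] (n : ℕ)
    (t : R.cocyc n →ₗ[S] D) (ht : Function.Surjective t)
    (ht' : ∀ φ, t φ = 0 ↔ R.IsCob φ.1) :
    Nonempty ((((Ext S (ModuleCat.{u} S) n).obj (Opposite.op (ModuleCat.of S (S ⧸ J)))).obj
      (ModuleCat.of S S)) ≃ₗ[S] D) := by
  obtain ⟨e⟩ := R.homology_equiv n t ht ht'
  exact ⟨(R.projRes.isoExt n (ModuleCat.of S S)).toLinearEquiv ≪≫ₗ e⟩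

end FreeRes

/-- **Fundamental local isomorphism (Koszul duality for a regular ideal).**
Let `S` be a commutative ring and `J ⊆ S` an ideal locally generated by a regular sequence
of length `c`.  Then `Ext^i_S(S/J, S) = 0` for `i ≠ c`, and there is an isomorphism
`Ext^c_S(S/J, S) ≅ ⋀^c (J/J²)^∨` of modules, where `(−)^∨ = Hom_{S/J}(−, S/J)`. -/
theorem ext_quotient_regular_ideal {S : Type*} [CommRing S] (J : Ideal S) (c : ℕ)
    (hreg : IsLocallyRegularOfCodim J c) :
    (∀ i : ℕ, i ≠ c →
      Subsingleton (((Ext S (ModuleCat S) i).obj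
        (Opposite.op (ModuleCat.of S (S ⧸ J)))).obj (ModuleCat.of S S))) ∧
    Nonempty ((((Ext S (ModuleCat S) c).obj
        (Opposite.op (ModuleCat.of S (S ⧸ J)))).obj (ModuleCat.of S S))
      ≃ₗ[S] Module.Dual (S ⧸ J) (⋀[S ⧸ J]^c J.Cotangent)) := by
  obtain ⟨R⟩ := FreeRes.exists_of_hasFiniteRes hreg.hasFiniteRes
  constructor
  · intro i hi
    obtain ⟨e⟩ := R.ext_equiv i (0 : R.cocyc i →ₗ[S] PUnit) (fun x => ⟨0, rfl⟩) fun φ =>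
      iff_of_true rfl (by
        rcases lt_or_gt_of_ne hi with h | h
        · exact R.isCob_of_lt_codim hreg h φ.1 φ.2
        · exact R.isCob_of_codim_lt h φ.1 φ.2)
    exact e.toEquiv.subsingleton
  · refine R.ext_equiv c (R.theta c) (R.theta_surjective hreg) fun φ =>
      ⟨R.isCob_of_theta_eq_zero hreg φ, fun h => ?_⟩
    refine LinearMap.ext fun w => ?_
    rw [R.theta_apply, R.clL_eq_zero φ h, map_zero, map_zero, LinearMap.zero_apply]
end

section
/- Let f : R → S be a surjection of regular rings with kernel J of codimension c, and suppose Ω_R and Ω_S are finite projective R- resp. S-modules (e.g., R, S regular F-finite of characteristic p). Then the conormal sequence 0 → J/J² → S ⊗_R Ω_R → Ω_S → 0 is a short exact sequence of S-modules, i.e. the map J/J² → S ⊗_R Ω_R is injective (and the sequence is split since Ω_S is projective). -/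
open scoped TensorProduct

/-!
The conormal sequence of `R → S` is split on the left by a section of the square-zero extension
`R ⧸ J ^ 2 → S` (`retractionKerCotangentToTensorEquivSection`), and such a section exists as soon
as `S` is formally smooth over `𝔽_p`. So everything reduces to formal smoothness of `S`
(`formallySmooth_ZMod`), which follows from a Frobenius argument on `S` alone.

Formal smoothness means that `Ω_S` is projective and that the first cotangent homology `H₁` of `S`
vanishes; the latter is checked on the local rings `T` of `S`. There `Ω_T` is free, with a basis of
the form `(d yᵢ)`, and `y` is a `p`-basis of `T`: the map
`Φ : T[Xᵢ] → T`, `a ↦ a ^ p` on coefficients and `Xᵢ ↦ yᵢ`, is surjective with kernel generated by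
the `Xᵢ ^ p - yᵢ`.

* Surjectivity (`surjective_eval₂_frobenius`): let `A` be the image of `Φ`. Then `T` is finite and
  unramified over `A`, and `(1 ⊗ s - s ⊗ 1) ^ p = 0` in `T ⊗[A] T` because `s ^ p ∈ A`. Hence
  `A → T` is a finite epimorphism of rings, so it is surjective.
* Kernel: modulo the `Xᵢ ^ p - yᵢ` every polynomial has degree `< p` in each variable
  (`exists_reduced`), and such a polynomial in the kernel vanishes, as one sees by applying the
  derivations of `T` dual to the `d yᵢ` and using that `T` is reduced
  (`eq_zero_of_eval₂_frobenius_eq_zero`).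

A homomorphism `u : T → B ⧸ I` with `I ^ 2 = 0` then lifts to `B`: Frobenius of `B` kills `I`, so
it induces `F : B ⧸ I → B`, and one sends `a ^ p` to `F (u a)` and `yᵢ` to any lift `zᵢ` of
`u yᵢ`; the relations hold because `F (u yᵢ) = zᵢ ^ p` (`formallySmooth_of_pbasis`).
-/

/-- The image of the Frobenius `r ↦ r^p` of `R`, as a subring. -/
def pPowers (R : Type*) [CommRing R] (p : ℕ) : Subring R :=
  Subring.closure (Set.range fun r : R => r ^ p)

/-! ### Existence and uniqueness of `p`-basis expansions -/

/-- If `T` is `F`-finite and the `d yᵢ` generate `Ω_T`, then `T` is generated by the `yᵢ` as an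
algebra over its subring of `p`-th powers. -/
lemma surjective_eval₂_frobenius (p : ℕ) [Fact p.Prime] {T κ : Type*} [CommRing T] [CharP T p]
    [Algebra (ZMod p) T] (hfin : (frobenius T p).Finite) (y : κ → T)
    (hy : Submodule.span T (Set.range fun i => KaehlerDifferential.D (ZMod p) T (y i)) = ⊤) :
    Function.Surjective (MvPolynomial.eval₂Hom (frobenius T p) y) := by
  set Φ := MvPolynomial.eval₂Hom (frobenius T p) y with hΦ
  have hpow (t : T) : t ^ p ∈ Φ.range := ⟨MvPolynomial.C t, by simp [hΦ, frobenius_def]⟩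
  have hyA (i) : y i ∈ Φ.range := ⟨MvPolynomial.X i, by simp [hΦ]⟩
  let A : Subalgebra (ZMod p) T :=
    { Φ.range with
      algebraMap_mem' := fun n => by
        have := hpow (algebraMap (ZMod p) T n)
        rwa [← map_pow, ZMod.pow_card] at this }
  have hAfin : Module.Finite A T := by
    let g : T →+* A := (frobenius T p).codRestrict A.toSubring fun t => hpow t
    have : (algebraMap A T).Finite :=
      RingHom.Finite.of_comp_finite (f := g) (by exact hfin)
    exact this
  have hunr : Algebra.FormallyUnramified A T := by
    constructor
    have hsurj := KaehlerDifferential.map_surjective (ZMod p) A T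
    have htop : LinearMap.range (KaehlerDifferential.map (ZMod p) A T T) = ⊤ :=
      LinearMap.range_eq_top.2 hsurj
    rw [LinearMap.range_eq_map, ← hy, Submodule.map_span, Submodule.span_eq_bot.2] at htop
    · exact (Submodule.subsingleton_iff T).1 (subsingleton_of_bot_eq_top htop)
    · rintro _ ⟨_, ⟨i, rfl⟩, rfl⟩
      rw [KaehlerDifferential.map_D]
      exact (KaehlerDifferential.D A T).map_algebraMap ⟨y i, hyA i⟩
  have hnil : IsNilpotent (KaehlerDifferential.ideal A T) := by
    rw [Ideal.FG.isNilpotent_iff_le_nilradical (KaehlerDifferential.ideal_fg A T),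
      ← KaehlerDifferential.span_range_eq_ideal, Ideal.span_le]
    rintro _ ⟨s, rfl⟩
    refine ⟨p, ?_⟩
    rcases subsingleton_or_nontrivial (T ⊗[A] T) with _ | _
    · exact Subsingleton.elim _ _
    have : CharP (T ⊗[A] T) p :=
      charP_of_injective_algebraMap (algebraMap (ZMod p) (T ⊗[A] T)).injective p
    rw [sub_pow_char, Algebra.TensorProduct.tmul_pow, Algebra.TensorProduct.tmul_pow, one_pow]
    exact sub_eq_zero.2 (Algebra.TensorProduct.tmul_one_eq_one_tmul (A := T) (B := T) (⟨s ^ p, hpow s⟩ : A)).symm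
  have hepi : Algebra.IsEpi A T := by
    rw [Algebra.isEpi_iff_forall_one_tmul_eq]
    intro a
    have := Algebra.FormallyUnramified.lift_unique (R := A) (A := T)
      (KaehlerDifferential.ideal A T) hnil Algebra.TensorProduct.includeRight
      Algebra.TensorProduct.includeLeft (by
        ext s
        exact (Ideal.Quotient.mk_eq_mk_iff_sub_mem _ _).2
          (KaehlerDifferential.one_smul_sub_smul_one_mem_ideal A s))
    exact congr($this a)
  intro t
  obtain ⟨⟨_, q, rfl⟩, hq⟩ := (Algebra.isEpi_iff_surjective_algebraMap_of_finite.1 hepi) t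
  exact ⟨q, hq⟩

/-- A derivation `D` of `T` with `D yⱼ = δᵢⱼ` kills `p`-th powers, so it corresponds to `∂/∂Xᵢ` under
`a ↦ a ^ p`, `Xⱼ ↦ yⱼ`. -/
lemma eval₂_frobenius_pderiv (p : ℕ) [Fact p.Prime] {T κ : Type*} [CommRing T] [CharP T p]
    [Algebra (ZMod p) T] (y : κ → T) (i : κ) (D : Derivation (ZMod p) T T)
    (hDi : D (y i) = 1) (hD : ∀ j ≠ i, D (y j) = 0) (q : MvPolynomial κ T) :
    MvPolynomial.eval₂Hom (frobenius T p) y (MvPolynomial.pderiv i q) =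
      D (MvPolynomial.eval₂Hom (frobenius T p) y q) := by
  classical
  induction q using MvPolynomial.induction_on with
  | C a => simp [frobenius_def, Derivation.leibniz_pow]
  | add q r hq hr => simp only [map_add, hq, hr]
  | mul_X q j hq =>
    rw [Derivation.leibniz, map_add, map_mul, Derivation.leibniz, smul_eq_mul, smul_eq_mul,
      map_mul, map_mul, hq, MvPolynomial.pderiv_X]
    rcases eq_or_ne j i with rfl | hj
    · simp [hDi]
    · simp [hj, hD j hj]

/-- The monomials in the `yᵢ` with exponents `< p` are linearly independent over `T ^ p`. By
induction on the total degree, all partial derivatives of a relation `q` vanish; the exponents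
being `< p`, this makes `q` constant. -/
lemma eq_zero_of_eval₂_frobenius_eq_zero (p : ℕ) [Fact p.Prime] {T κ : Type*} [CommRing T]
    [CharP T p] [IsReduced T] [Algebra (ZMod p) T] (y : κ → T)
    (b : Module.Basis κ T (Ω[T⁄ZMod p])) (hb : ∀ i, b i = KaehlerDifferential.D (ZMod p) T (y i))
    (q : MvPolynomial κ T) (hq : ∀ m ∈ q.support, ∀ i, m i < p)
    (h0 : MvPolynomial.eval₂Hom (frobenius T p) y q = 0) : q = 0 := by
  classical
  induction hn : q.totalDegree using Nat.strong_induction_on generalizing q with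
  | _ n ih =>
  have hpd (i : κ) : MvPolynomial.pderiv i q = 0 := by
    by_contra hne
    have hsupp (m) (hm : m ∈ (MvPolynomial.pderiv i q).support) :
        m + Finsupp.single i 1 ∈ q.support := by
      rw [MvPolynomial.mem_support_iff, MvPolynomial.coeff_pderiv] at hm
      exact MvPolynomial.mem_support_iff.2 (left_ne_zero_of_mul hm)
    refine hne (ih (MvPolynomial.pderiv i q).totalDegree ?_ _ ?_ ?_ rfl)
    · obtain ⟨m, hm, hm'⟩ := Finset.exists_mem_eq_sup _ (MvPolynomial.support_nonempty.2 hne)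
        (fun m : κ →₀ ℕ => m.sum fun _ e => e)
      have := MvPolynomial.le_totalDegree (hsupp m hm)
      rw [Finsupp.sum_add_index' (by simp) (by simp), Finsupp.sum_single_index rfl, hn] at this
      rw [MvPolynomial.totalDegree, hm']
      omega
    · intro m hm j
      have := hq _ (hsupp m hm) j
      rw [Finsupp.add_apply] at this
      omega
    · -- The derivation of `T` dual to the basis vector `d yᵢ`.
      let D := (b.coord i).compDer (KaehlerDifferential.D (ZMod p) T)
      rw [eval₂_frobenius_pderiv p y i D, h0, map_zero]
      · simp [D, ← hb]
      · intro j hj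
        simp [D, ← hb, hj]
  have hconst : q = MvPolynomial.C (q.coeff 0) := by
    ext m
    rw [MvPolynomial.coeff_C]
    split_ifs with hm
    · rw [hm]
    · obtain ⟨i, hi⟩ := Finsupp.ne_iff.1 (Ne.symm hm)
      by_contra hne
      have hlt := hq m (MvPolynomial.mem_support_iff.2 hne) i
      have hc := congr(MvPolynomial.coeff (m - Finsupp.single i 1) $(hpd i))
      have h1 : m - Finsupp.single i 1 + Finsupp.single i 1 = m :=
        tsub_add_cancel_of_le (by simpa [Nat.one_le_iff_ne_zero] using hi)
      have hu : IsUnit ((m i : ℕ) : T) := by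
        have : IsUnit ((m i : ℕ) : ZMod p) := by
          rw [isUnit_iff_ne_zero, Ne, ZMod.natCast_eq_zero_iff]
          exact Nat.not_dvd_of_pos_of_lt (Nat.pos_of_ne_zero hi) hlt
        simpa using this.map (algebraMap (ZMod p) T)
      rw [MvPolynomial.coeff_pderiv, h1, MvPolynomial.coeff_zero] at hc
      have h2 : (((m - Finsupp.single i 1 : κ →₀ ℕ) i : ℕ) : T) + 1 = (m i : ℕ) := by
        conv_rhs => rw [← h1]
        rw [Finsupp.add_apply, Finsupp.single_eq_same, Nat.cast_add, Nat.cast_one]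
      rw [h2] at hc
      exact hne (hu.mul_left_eq_zero.1 hc)
  rw [hconst] at h0 ⊢
  have : frobenius T p (q.coeff 0) = 0 := by simpa using h0
  rw [frobenius_def] at this
  rw [pow_eq_zero_iff (Fact.out : p.Prime).ne_zero] at this
  rw [this, map_zero]

/-- Division by the `Xᵢ ^ p - yᵢ`: every polynomial is congruent to one of degree `< p` in each
variable. -/
lemma exists_reduced (p : ℕ) [Fact p.Prime] {T κ : Type*} [CommRing T]
    (y : κ → T) (q : MvPolynomial κ T) :
    ∃ r : MvPolynomial κ T, (∀ m ∈ r.support, ∀ i, m i < p) ∧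
      q - r ∈ Ideal.span (Set.range fun i =>
        (MvPolynomial.X i ^ p - MvPolynomial.C (y i) : MvPolynomial κ T)) := by
  classical
  set L := Ideal.span (Set.range fun i =>
        (MvPolynomial.X i ^ p - MvPolynomial.C (y i) : MvPolynomial κ T)) with hL
  have hp := (Fact.out : p.Prime).pos
  induction q using MvPolynomial.induction_on' with
  | add q₁ q₂ h₁ h₂ =>
    obtain ⟨r₁, h₁, h₁'⟩ := h₁
    obtain ⟨r₂, h₂, h₂'⟩ := h₂
    refine ⟨r₁ + r₂, fun m hm i => ?_, ?_⟩
    · rcases Finset.mem_union.1 (MvPolynomial.support_add hm) with h | h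
      exacts [h₁ m h i, h₂ m h i]
    · convert L.add_mem h₁' h₂' using 1
      ring
  | monomial m a =>
    refine ⟨MvPolynomial.monomial (m.mapRange (· % p) (Nat.zero_mod p))
      (a * m.prod fun i e => y i ^ (e / p)), fun n hn i => ?_, ?_⟩
    · obtain rfl := Finset.mem_singleton.1 (MvPolynomial.support_monomial_subset hn)
      exact Nat.mod_lt _ hp
    · rw [← Ideal.Quotient.eq, MvPolynomial.monomial_eq, MvPolynomial.monomial_eq,
        Finsupp.prod_mapRange_index (by simp), MvPolynomial.C_mul, mul_assoc, map_mul, map_mul]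
      congr 1
      simp only [Finsupp.prod, map_prod, map_mul, ← Finset.prod_mul_distrib]
      refine Finset.prod_congr rfl fun i _ => ?_
      have hi : Ideal.Quotient.mk L (MvPolynomial.X i ^ p) =
          Ideal.Quotient.mk L (MvPolynomial.C (y i)) :=
        Ideal.Quotient.eq.2 (Ideal.subset_span ⟨i, rfl⟩)
      conv_lhs => rw [← Nat.div_add_mod (m i) p, pow_add, pow_mul, map_mul, map_pow, hi]
      simp

/-! ### Formal smoothness over `𝔽_p` -/

/-- A reduced ring whose module of differentials has a basis `(d yᵢ)`, and which is generated by the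
`yᵢ` over its `p`-th powers, is formally smooth over `𝔽_p`. -/
lemma formallySmooth_of_pbasis (p : ℕ) [Fact p.Prime] {T κ : Type*} [CommRing T]
    [CharP T p] [IsReduced T] [Algebra (ZMod p) T] (y : κ → T)
    (b : Module.Basis κ T (Ω[T⁄ZMod p])) (hb : ∀ i, b i = KaehlerDifferential.D (ZMod p) T (y i))
    (hgen : Function.Surjective (MvPolynomial.eval₂Hom (frobenius T p) y)) :
    Algebra.FormallySmooth (ZMod p) T := by
  refine Algebra.FormallySmooth.of_comp_surjective fun B _ _ I hI u => ?_
  rcases subsingleton_or_nontrivial B with hB | hB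
  · have : Subsingleton (B ⧸ I) := Ideal.Quotient.mk_surjective.subsingleton
    exact ⟨{ toFun := fun _ => 0
             map_one' := Subsingleton.elim _ _
             map_mul' := fun _ _ => Subsingleton.elim _ _
             map_zero' := rfl
             map_add' := fun _ _ => Subsingleton.elim _ _
             commutes' := fun _ => Subsingleton.elim _ _ },
      AlgHom.ext fun _ => Subsingleton.elim _ _⟩
  have : CharP B p := charP_of_injective_algebraMap (algebraMap (ZMod p) B).injective p
  have hkill (x : B) (hx : x ∈ I) : x ^ p = 0 := by
    have h2 : x ^ 2 ∈ I ^ 2 := Ideal.pow_mem_pow hx 2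
    rw [hI, Ideal.mem_bot] at h2
    exact pow_eq_zero_of_le (Fact.out : p.Prime).two_le h2
  let F : B ⧸ I →+* B := Ideal.Quotient.lift I (frobenius B p) fun x hx => hkill x hx
  choose z hz using fun i => Ideal.Quotient.mk_surjective (I := I) (u (y i))
  let Ψ := MvPolynomial.eval₂Hom (F.comp u.toRingHom) z
  let Φ := MvPolynomial.eval₂Hom (frobenius T p) y
  have hFy (i) : F (u (y i)) = z i ^ p := by rw [← hz]; rfl
  have hΨL (q) (hq : q ∈ Ideal.span (Set.range fun i =>
        (MvPolynomial.X i ^ p - MvPolynomial.C (y i) : MvPolynomial κ T))) : Ψ q = 0 := by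
    refine (Ideal.span_le (I := RingHom.ker Ψ)).2 ?_ hq
    rintro _ ⟨i, rfl⟩
    simp [RingHom.mem_ker, Ψ, hFy]
  have hΦL (q) (hq : q ∈ Ideal.span (Set.range fun i =>
        (MvPolynomial.X i ^ p - MvPolynomial.C (y i) : MvPolynomial κ T))) : Φ q = 0 := by
    refine (Ideal.span_le (I := RingHom.ker Φ)).2 ?_ hq
    rintro _ ⟨i, rfl⟩
    simp [RingHom.mem_ker, Φ, frobenius_def]
  have hker : RingHom.ker Φ ≤ RingHom.ker Ψ := by
    intro q hq
    obtain ⟨r, hr, hqr⟩ := exists_reduced p y q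
    have h1 := hΦL _ hqr
    rw [map_sub, (RingHom.mem_ker).1 hq, zero_sub, neg_eq_zero] at h1
    obtain rfl := eq_zero_of_eval₂_frobenius_eq_zero p y b hb r hr h1
    simpa using hΨL _ hqr
  let v : T →+* B := Φ.liftOfSurjective hgen ⟨Ψ, hker⟩
  have hv : v.comp Φ = Ψ := RingHom.liftOfSurjective_comp Φ hgen ⟨Ψ, hker⟩
  have hFmk (x : B ⧸ I) : Ideal.Quotient.mk I (F x) = x ^ p := by
    obtain ⟨x, rfl⟩ := Ideal.Quotient.mk_surjective x
    rfl
  have hmv : ((Ideal.Quotient.mk I).comp v).comp Φ = u.toRingHom.comp Φ := by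
    rw [RingHom.comp_assoc, hv]
    ext
    · simp [Ψ, Φ, hFmk, frobenius_def]
    · simp [Ψ, Φ, hz]
  have hmv' : (Ideal.Quotient.mk I).comp v = u.toRingHom :=
    (RingHom.cancel_right hgen).1 hmv
  -- Ring homomorphisms out of `ZMod p` are unique, so `v` is `ZMod p`-linear.
  refine ⟨{ v with commutes' := fun n =>
    congr($(Subsingleton.elim (v.comp (algebraMap (ZMod p) T)) (algebraMap (ZMod p) B)) n) }, ?_⟩
  ext t
  exact congr($hmv' t)

lemma frobenius_finite_of_pPowers (p : ℕ) [Fact p.Prime] {S : Type*} [CommRing S] [CharP S p]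
    [Module.Finite (pPowers S p) S] : (frobenius S p).Finite := by
  have hle : pPowers S p ≤ (frobenius S p).range :=
    Subring.closure_le.2 (by rintro _ ⟨r, rfl⟩; exact ⟨r, rfl⟩)
  let g : pPowers S p →+* (frobenius S p).range := Subring.inclusion hle
  have h1 : (algebraMap (frobenius S p).range S).Finite :=
    RingHom.Finite.of_comp_finite (f := g)
      (show (algebraMap (pPowers S p) S).Finite from ‹Module.Finite (pPowers S p) S›)
  exact h1.comp (RingHom.Finite.of_surjective _ (frobenius S p).rangeRestrict_surjective)

lemma frobenius_finite_of_isLocalization.{u} (p : ℕ) [Fact p.Prime] {S T : Type u} [CommRing S]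
    [CommRing T] [CharP S p] [CharP T p] [Algebra S T] (M : Submonoid S) [IsLocalization M T]
    (h : (frobenius S p).Finite) : (frobenius T p).Finite := by
  -- Inverting `p`-th powers of elements of `M` is the same as inverting `M`.
  have : IsLocalization (M.map (frobenius S p)) T := by
    refine (IsLocalization.iff_of_le_of_exists_dvd _ M ?_ ?_).2 ‹_›
    · rintro _ ⟨m, hm, rfl⟩
      exact M.pow_mem hm p
    · exact fun m hm => ⟨_, ⟨m, hm, rfl⟩, dvd_pow_self m (Fact.out : p.Prime).ne_zero⟩
  convert RingHom.finite_localizationPreserves (frobenius S p) M T T h using 1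
  refine IsLocalization.ringHom_ext M (RingHom.ext fun x => ?_)
  simp [frobenius_def]

/-- Absolute differentials agree with differentials over `𝔽_p`, since `Ω[𝔽_p⁄ℤ] = 0`. -/
lemma kaehlerDifferential_equiv_ZMod (p : ℕ) {S : Type*} [CommRing S] [Algebra (ZMod p) S] :
    Nonempty (Ω[S⁄ℤ] ≃ₗ[S] Ω[S⁄ZMod p]) := by
  have hs : Function.Surjective (algebraMap ℤ (ZMod p)) := ZMod.intCast_surjective
  have := KaehlerDifferential.subsingleton_of_surjective ℤ (ZMod p) hs
  refine ⟨LinearEquiv.ofBijective (KaehlerDifferential.map ℤ (ZMod p) S S)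
    ⟨?_, KaehlerDifferential.map_surjective ℤ (ZMod p) S⟩⟩
  rw [injective_iff_map_eq_zero]
  intro x hx
  obtain ⟨z, rfl⟩ := (KaehlerDifferential.exact_mapBaseChange_map ℤ (ZMod p) S x).1 hx
  rw [Subsingleton.elim z 0, map_zero]

/-- A reduced `F`-finite ring of characteristic `p` whose module of differentials is finite
projective is formally smooth over `𝔽_p`. -/
lemma formallySmooth_ZMod (p : ℕ) [Fact p.Prime] {S : Type*} [CommRing S] [CharP S p]
    [IsReduced S] [Algebra (ZMod p) S] (hfin : (frobenius S p).Finite)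
    [Module.Finite S (Ω[S⁄ZMod p])] [Module.Projective S (Ω[S⁄ZMod p])] :
    Algebra.FormallySmooth (ZMod p) S := by
  refine ⟨inferInstance, ?_⟩
  refine Module.subsingleton_of_localization_maximal (R := S)
    (fun P _ => Algebra.H1Cotangent (ZMod p) (Localization.AtPrime P))
    (fun P _ => Algebra.H1Cotangent.map (ZMod p) (ZMod p) S (Localization.AtPrime P)) ?_
  intro P hP
  set T := Localization.AtPrime P
  have : CharP T p := charP_of_injective_algebraMap (algebraMap (ZMod p) T).injective p
  have : IsReduced T := inferInstanceAs (IsReduced (Localization P.primeCompl))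
  have hb := KaehlerDifferential.isBaseChange_of_formallyEtale (ZMod p) S T
  have : Module.Finite T (Ω[T⁄ZMod p]) := .of_surjective hb.equiv.toLinearMap hb.equiv.surjective
  have : Module.Projective T (Ω[T⁄ZMod p]) := .of_equiv hb.equiv
  have := Module.finitePresentation_of_projective T (Ω[T⁄ZMod p])
  obtain ⟨κ, a, b, hb⟩ := Module.exists_basis_of_span_of_flat _
    (KaehlerDifferential.span_range_derivation (ZMod p) T)
  have := formallySmooth_of_pbasis p a b hb
    (surjective_eval₂_frobenius p (frobenius_finite_of_isLocalization p P.primeCompl hfin) a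
      (by simpa only [← hb] using b.span_eq))
  infer_instance

/-! ### Splitting the conormal sequence -/

/-- If `S` is formally smooth over some base ring `k`, then `R ⧸ J ^ 2 → S` has a section. It is
recorded as a bare ring homomorphism, so that it can be used over `ℤ`, where `S` need not be
formally smooth. -/
lemma exists_section_of_formallySmooth (k : Type*) {R S : Type*} [CommRing k] [CommRing R]
    [CommRing S] [Algebra k R] [Algebra k S] [Algebra R S] [IsScalarTower k R S]
    [Algebra.FormallySmooth k S] (hsurj : Function.Surjective (algebraMap R S)) :
    ∃ g : S →+* R ⧸ RingHom.ker (algebraMap R S) ^ 2,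
      ∀ x, (IsScalarTower.toAlgHom ℤ R S).kerSquareLift (g x) = x := by
  let f := (IsScalarTower.toAlgHom k R S).kerSquareLift
  have hf : Function.Surjective f := Ideal.Quotient.lift_surjective_of_surjective _ _ hsurj
  have hker : RingHom.ker f.toRingHom ^ 2 = ⊥ := by
    rw [AlgHom.ker_kerSquareLift, Ideal.cotangentIdeal_square]
  let g := Algebra.FormallySmooth.liftOfSurjective (AlgHom.id k S) f hf ⟨2, hker⟩
  have hg : f.comp g = AlgHom.id _ _ := Algebra.FormallySmooth.comp_liftOfSurjective _ _ _ _
  exact ⟨g.toRingHom, fun x => congr($hg x)⟩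

/-- **Left-exactness of the conormal sequence for a surjection of regular `F`-finite
rings.**  Let `R → S` be a surjection of Noetherian regular `F`-finite rings of
characteristic `p` with kernel `J` (regularity of a Noetherian `F`-finite ring being
equivalent to being reduced with finite projective module of absolute Kähler
differentials), and suppose the absolute Kähler differentials `Ω_R` and `Ω_S` are finite
projective.  Then the conormal sequence `0 → J/J² → S ⊗_R Ω_R → Ω_S → 0` is a short exact
sequence of `S`-modules: the map `J/J² → S ⊗_R Ω_R` is injective, and the sequence is
split (since `Ω_S` is projective), i.e. the injection admits a retraction. -/
theorem conormal_sequence_left_exact (p : ℕ) [Fact p.Prime]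
    {R S : Type*} [CommRing R] [CommRing S] [CharP R p] [CharP S p]
    [IsNoetherianRing R] [IsNoetherianRing S]
    [Module.Finite (pPowers R p) R] [Module.Finite (pPowers S p) S]
    (hredR : IsReduced R) (hredS : IsReduced S)
    [Algebra R S] (hsurj : Function.Surjective (algebraMap R S))
    [Module.Finite R (KaehlerDifferential ℤ R)]
    [Module.Projective R (KaehlerDifferential ℤ R)]
    [Module.Finite S (KaehlerDifferential ℤ S)]
    [Module.Projective S (KaehlerDifferential ℤ S)] :
    Function.Injective (KaehlerDifferential.kerCotangentToTensor ℤ R S) ∧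
    ∃ ρ : (S ⊗[R] KaehlerDifferential ℤ R) →ₗ[R] (RingHom.ker (algebraMap R S)).Cotangent,
      ρ.comp (KaehlerDifferential.kerCotangentToTensor ℤ R S) = LinearMap.id := by
  suffices h : ∃ ρ : (S ⊗[R] KaehlerDifferential ℤ R) →ₗ[R]
      (RingHom.ker (algebraMap R S)).Cotangent,
      ρ.comp (KaehlerDifferential.kerCotangentToTensor ℤ R S) = LinearMap.id by
    obtain ⟨ρ, hρ⟩ := h
    exact ⟨Function.LeftInverse.injective (g := ρ) fun x => congr($hρ x), ρ, hρ⟩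
  let _ : Algebra (ZMod p) R := ZMod.algebra R p
  let _ : Algebra (ZMod p) S := ZMod.algebra S p
  have : IsScalarTower (ZMod p) R S :=
    .of_algebraMap_eq' (Subsingleton.elim _ _)
  obtain ⟨e⟩ := kaehlerDifferential_equiv_ZMod p (S := S)
  have : Module.Finite S (Ω[S⁄ZMod p]) := .of_surjective e.toLinearMap e.surjective
  have : Module.Projective S (Ω[S⁄ZMod p]) := .of_equiv e
  have := formallySmooth_ZMod p (frobenius_finite_of_pPowers p (S := S))
  obtain ⟨g, hg⟩ := exists_section_of_formallySmooth (ZMod p) hsurj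
  obtain ⟨ρ, hρ⟩ := (retractionKerCotangentToTensorEquivSection
    (R := ℤ) hsurj).symm ⟨g.toIntAlgHom, AlgHom.ext hg⟩
  exact ⟨ρ, hρ⟩
end
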